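/- arXiv:2008.06554 — 2 statements merged into one kernel-verified Lean document; each statement's English description precedes it below -/
import Mathlib

section
/- There is an absolute constant K such that the following holds in the Line setting. Assume u > (p+2)·log₂ v + log₂ q and let h := s/(u − (p+2)·log₂ v − log₂ q) + 1. For every deterministic MPC algorithm with m machines, local memory s bits, and at most q oracle queries per machine per round, and every integer k with 0 ≤ k < w/p − 1, the probability over uniformly random (RO, X) that Q^{(≤k)} ∩ C^{(k+1)} ≠ ∅ is at most K·(k+1)·m·((h/v)^p + w·q·v^p·2^(−u) + w·2^(−(u − (p+2)·log₂ v − log₂ q))). (The paper's inductive Claim in the proof of Lemma 3.6 states the bound (k+1)·m·((h/v)^{log²w} + w·q·v^{log²w}·2^(−u) + 2^(−(u − (log²w+2)·log v − log q))).) -/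
/-- Probability of `P` under the uniform distribution on a finite type `Ω`. -/
noncomputable def unifProb {Ω : Type} [Fintype Ω] (P : Ω → Prop) : ℝ :=
  (Set.ncard {ω : Ω | P ω} : ℝ) / (Fintype.card Ω : ℝ)
/-- Bit strings of length `k`. -/
abbrev Bits (k : ℕ) := Fin k → Bool

/-- The `j`-th bit (`0`-based) of a bit string, `false` out of range. -/
def bitAt {k : ℕ} (y : Bits k) (j : ℕ) : Bool := if h : j < k then y ⟨j, h⟩ else false

/-- The `i`-th block (`0`-based) of the input `X = (x_1, …, x_v)`. -/
def getX {u v : ℕ} (X : Fin v → Bits u) (i : ℕ) : Bits u :=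
  if h : i < v then X ⟨i, h⟩ else fun _ => false
/-- The integer encoded by the first `κ` bits of a bit string. -/
def natOf {n : ℕ} (y : Bits n) (κ : ℕ) : ℕ :=
  ∑ j ∈ Finset.range κ, if bitAt y j then 2 ^ j else 0

/-- `⟨i, x, ρ⟩` : the `n`-bit concatenation of the `W`-bit binary encoding of `i`, the
`u`-bit strings `x` and `ρ`, and trailing zeros. -/
def lineStr (n W u : ℕ) (i : ℕ) (x ρ : Bits u) : Bits n := fun j =>
  if (j : ℕ) < W then Nat.testBit i (j : ℕ)
  else if (j : ℕ) < W + u then bitAt x ((j : ℕ) - W)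
  else if (j : ℕ) < W + 2 * u then bitAt ρ ((j : ℕ) - W - u)
  else false

/-- `lineChain n u v W κ RO X k = (ℓ_{k+1} − 1, r_{k+1})` : the Line chain, with the
pointer stored `0`-based.  `ℓ_1 = 1, r_1 = 0^u`; `e_i = ⟨i, x_{ℓ_i}, r_i⟩`;
`ℓ_{i+1} − 1` is the integer encoded by the first `κ` bits of `RO(e_i)` (reduced mod
`v`, which is the identity when `v = 2^κ`), and `r_{i+1}` is the `u` bits of `RO(e_i)`
in positions `κ+1, …, κ+u`. -/
def lineChain (n u v W κ : ℕ) (RO : Bits n → Bits n) (X : Fin v → Bits u) :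
    ℕ → ℕ × Bits u
  | 0 => (0, fun _ => false)
  | k + 1 =>
    let c := lineChain n u v W κ RO X k
    let e := lineStr n W u (k + 1) (getX X (c.1 % v)) c.2
    (natOf (RO e) κ % v, fun j => bitAt (RO e) (κ + (j : ℕ)))

/-- `lineE n u v W κ RO X k` is the paper's `e_{k+1}`. -/
def lineE (n u v W κ : ℕ) (RO : Bits n → Bits n) (X : Fin v → Bits u) (k : ℕ) : Bits n :=
  lineStr n W u (k + 1) (getX X ((lineChain n u v W κ RO X k).1 % v))
    (lineChain n u v W κ RO X k).2

/-- `branchE n u v W κ RO X j a c` is the branch entry `e'_c` determined by the paper's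
(1-based) index `j` and the (0-based) sequence `a` (only `a 1, …, a c` matter):
`e'_0 = ⟨j+1, x_{ℓ_{j+1}}, r_{j+1}⟩ = e_{j+1}`, and for `c ≥ 1`,
`e'_c = ⟨j+c+1, x_{a_c}, ρ_c⟩` where `ρ_c` is the `u` bits of `RO(e'_{c−1})` in
positions `κ+1, …, κ+u`. -/
def branchE (n u v W κ : ℕ) (RO : Bits n → Bits n) (X : Fin v → Bits u) (j : ℕ)
    (a : ℕ → Fin v) : ℕ → Bits n
  | 0 => lineE n u v W κ RO X j
  | c + 1 => lineStr n W u (j + c + 2) (X (a (c + 1)))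
      (fun t => bitAt (RO (branchE n u v W κ RO X j a c)) (κ + (t : ℕ)))
/-- Answers to the first `t` queries of a deterministic adaptive oracle algorithm whose
next-query function is `f`. -/
def advAns (n : ℕ) (RO : Bits n → Bits n) (f : List (Bits n) → Bits n) : ℕ → List (Bits n)
  | 0 => []
  | t + 1 => advAns n RO f t ++ [RO (f (advAns n RO f t))]

/-- The `(t+1)`-st query (so the paper's `q_{t+1}`) of the adaptive algorithm `f`. -/
def advQ (n : ℕ) (RO : Bits n → Bits n) (f : List (Bits n) → Bits n) (t : ℕ) : Bits n :=
  f (advAns n RO f t)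
/-- A deterministic MPC algorithm with `m` machines, local memory `s` bits, at most `q`
adaptive oracle queries (to an oracle on `n`-bit strings) per machine per round, on
inputs from `I`.  `init` splits the input into the machines' initial states, `qf k i` is
machine `i`'s next-query function in round `k` (from its state and the answers received
so far in the round), and `cf k i` produces the messages machine `i` sends to each
machine at the end of round `k`; each machine receives at most `s` bits per round. -/
structure MPC (n s q m : ℕ) (I : Type) where
  init : I → Fin m → Bits s
  qf : ℕ → Fin m → Bits s → List (Bits n) → Bits n
  cf : ℕ → Fin m → Bits s → List (Bits n) → Fin m → List Bool
  comm_le : ∀ (k : ℕ) (st : Fin m → Bits s) (ans : Fin m → List (Bits n)) (j : Fin m),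
    (∑ i : Fin m, (cf k i (st i) (ans i) j).length) ≤ s

/-- Pad/truncate a list of booleans to an `s`-bit state. -/
def listToBits (s : ℕ) (L : List Bool) : Bits s := fun b => L.getD (b : ℕ) false

/-- `mstate A RO X k i` : the state of machine `i` at the beginning of round `k` when the
MPC algorithm `A` is run with oracle `RO` on input `X`. -/
def mstate {n s q m : ℕ} {I : Type} (A : MPC n s q m I) (RO : Bits n → Bits n) (X : I) :
    ℕ → Fin m → Bits s
  | 0 => A.init X
  | k + 1 => fun j =>
      listToBits s ((List.ofFn (fun i : Fin m =>
        A.cf k i (mstate A RO X k i)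
          (advAns n RO (A.qf k i (mstate A RO X k i)) q) j)).flatten)

/-- The `(t+1)`-st oracle query of machine `i` in round `k` of the run of `A` with
oracle `RO` on input `X`. -/
def mquery {n s q m : ℕ} {I : Type} (A : MPC n s q m I) (RO : Bits n → Bits n) (X : I)
    (k : ℕ) (i : Fin m) (t : ℕ) : Bits n :=
  advQ n RO (A.qf k i (mstate A RO X k i)) t

namespace LineMPC

section prob

open Classical in
theorem unifProb_eq {Ω : Type} [Fintype Ω] (P : Ω → Prop) :
    unifProb P = (∑ ω : Ω, if P ω then (1 : ℝ) else 0) / (Fintype.card Ω : ℝ) := by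
  unfold unifProb
  congr 1
  rw [Set.ncard_eq_toFinset_card', Finset.sum_boole]
  congr 2
  ext; simp

theorem unifProb_mono {Ω : Type} [Fintype Ω] {P Q : Ω → Prop} (h : ∀ ω, P ω → Q ω) :
    unifProb P ≤ unifProb Q := by
  unfold unifProb
  gcongr
  · exact Set.toFinite _
  · exact h _

theorem unifProb_or {Ω : Type} [Fintype Ω] (P Q : Ω → Prop) :
    unifProb (fun ω => P ω ∨ Q ω) ≤ unifProb P + unifProb Q := by
  unfold unifProb
  rw [← add_div]
  gcongr
  exact_mod_cast Set.ncard_union_le {ω | P ω} {ω | Q ω}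

open Classical in
theorem unifProb_exists {Ω ι : Type} [Fintype Ω] (s : Finset ι) (P : ι → Ω → Prop) :
    unifProb (fun ω => ∃ i ∈ s, P i ω) ≤ ∑ i ∈ s, unifProb (P i) := by
  induction s using Finset.induction_on with
  | empty => simp [unifProb]
  | insert a s ha ih =>
    rw [Finset.sum_insert ha]
    refine le_trans (unifProb_mono (Q := fun ω => P a ω ∨ ∃ i ∈ s, P i ω) ?_)
      (le_trans (unifProb_or _ _) (by gcongr))
    intro ω h
    simpa using h

open Classical in
/-- Counting after resampling one part of the randomness. -/
theorem lens {Ω R : Type} [Fintype Ω] [Fintype R] (S : Ω → Prop) (set : Ω → R → Ω)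
    (get : Ω → R) (h1 : ∀ ω r r', set (set ω r) r' = set ω r') (h2 : ∀ ω, set ω (get ω) = ω)
    (h3 : ∀ ω r, get (set ω r) = r) (c : ℝ) (hc0 : 0 ≤ c)
    (hc : ∀ ω, (Set.ncard {r | S (set ω r)} : ℝ) ≤ c) :
    unifProb S * Fintype.card R ≤ c := by
  rw [unifProb_eq]
  have key : (∑ ω : Ω, if S ω then (1 : ℝ) else 0) * Fintype.card R
      = ∑ ω : Ω, (Set.ncard {r | S (set ω r)} : ℝ) := by
    have e : Function.Involutive (fun x : Ω × R => (set x.1 x.2, get x.1)) := by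
      rintro ⟨ω, r⟩
      simp [h1, h2, h3]
    set g : Ω → ℝ := fun ω => if S ω then (1 : ℝ) else 0 with hg
    have : ∑ x : Ω × R, g x.1 = ∑ x : Ω × R, g (set x.1 x.2) := by
      rw [← e.bijective.sum_comp]
    rw [Fintype.sum_prod_type, Fintype.sum_prod_type] at this
    simp only [Finset.sum_const, nsmul_eq_mul, Finset.card_univ] at this
    rw [← Finset.mul_sum, mul_comm] at this
    rw [this]
    simp only [hg]
    refine Finset.sum_congr rfl fun ω _ => ?_
    rw [Set.ncard_eq_toFinset_card', Finset.sum_boole]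
    congr 2
    ext; simp
  rw [div_mul_eq_mul_div, key]
  refine div_le_of_le_mul₀ (by positivity) hc0 ?_
  calc _ ≤ ∑ ω : Ω, c := Finset.sum_le_sum fun ω _ => hc ω
    _ = _ := by simp [mul_comm]

theorem unifProb_transfer {A Ω Y : Type} [Fintype A] [Fintype Ω] [Fintype Y] [Nonempty Y]
    (e : A → Ω × Y) (he : Function.Injective e) (hcard : Fintype.card A = Fintype.card (Ω × Y))
    (P : Ω → Prop) : unifProb P = unifProb (fun a => P (e a).1) := by
  classical
  have hb : Function.Bijective e := (Fintype.bijective_iff_injective_and_card e).2 ⟨he, hcard⟩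
  rw [unifProb_eq, unifProb_eq, hcard]
  set g : Ω → ℝ := fun ω => if P ω then (1 : ℝ) else 0 with hg
  have h1 : (∑ a : A, if P (e a).1 then (1 : ℝ) else 0) = ∑ x : Ω × Y, g x.1 := by
    rw [← hb.sum_comp]
  rw [h1, Fintype.sum_prod_type]
  simp only [Finset.sum_const, nsmul_eq_mul, Finset.card_univ]
  rw [← Finset.mul_sum, Fintype.card_prod]
  have : (Fintype.card Y : ℝ) ≠ 0 := by simp
  push_cast
  rw [mul_comm (Fintype.card Ω : ℝ), mul_div_mul_left _ _ this]

end prob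

section basics

variable {n : ℕ}

theorem bitAt_fin {k : ℕ} (y : Bits k) (j : Fin k) : bitAt y j = y j := by
  simp [bitAt]

theorem lineStr_inj {W u i i' : ℕ} {x x' ρ ρ' : Bits u} (hn : W + 2 * u ≤ n)
    (h : lineStr n W u i x ρ = lineStr n W u i' x' ρ') : x = x' ∧ ρ = ρ' := by
  constructor
  · ext j
    have := congrFun h ⟨W + j, by omega⟩
    have hj : W + (j : ℕ) < W + u := by omega
    simpa [lineStr, hj, bitAt_fin] using this
  · ext j
    have := congrFun h ⟨W + u + j, by omega⟩
    have h1 : ¬ W + u + (j : ℕ) < W := by omega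
    have h2 : ¬ W + u + (j : ℕ) < W + u := by omega
    have h3 : W + u + (j : ℕ) < W + 2 * u := by omega
    have h4 : W + u + (j : ℕ) - W - u = j := by omega
    simpa [lineStr, h1, h2, h3, h4, bitAt_fin] using this

theorem lineStr_idx {W u i i' : ℕ} {x x' ρ ρ' : Bits u} (hn : W + 2 * u ≤ n)
    (hi : i < 2 ^ W) (hi' : i' < 2 ^ W)
    (h : lineStr n W u i x ρ = lineStr n W u i' x' ρ') : i = i' := by
  apply Nat.eq_of_testBit_eq
  intro j
  by_cases hj : j < W
  · have := congrFun h ⟨j, by omega⟩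
    simpa [lineStr, hj] using this
  · have : 2 ^ W ≤ 2 ^ j := Nat.pow_le_pow_right (by norm_num) (by omega)
    rw [Nat.testBit_lt_two_pow (by omega), Nat.testBit_lt_two_pow (by omega)]

theorem natOf_inj {κ : ℕ} (b b' : Bits κ) (h : natOf b κ = natOf b' κ) : b = b' := by
  have h2 : ∀ c : Bits κ, natOf c κ
      = ∑ j ∈ (Finset.range κ).filter (fun j => bitAt c j = true), 2 ^ j := by
    intro c; rw [natOf, Finset.sum_filter]
  rw [h2, h2] at h
  have := Finset.geomSum_injective (n := 2) le_rfl h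
  ext j
  have := Finset.ext_iff.1 this j
  simp only [Finset.mem_filter, Finset.mem_range, j.2, true_and, bitAt_fin] at this
  exact Bool.eq_iff_iff.2 this

theorem natOf_lt {κ : ℕ} (b : Bits n) : natOf b κ < 2 ^ κ := by
  rw [natOf, ← Finset.sum_filter]
  exact Nat.geomSum_lt le_rfl (fun k hk => by simp at hk; exact hk.1)

/-- Overwrite `T` at the points `E 0, …, E (N-1)` with `z 0, …, z (N-1)`. -/
noncomputable def ovw (T : Bits n → Bits n) (E z : ℕ → Bits n) : ℕ → Bits n → Bits n
  | 0 => T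
  | N + 1 => Function.update (ovw T E z N) (E N) (z N)

theorem ovw_ne (T : Bits n → Bits n) (E z : ℕ → Bits n) (N : ℕ) (y : Bits n)
    (h : ∀ i < N, y ≠ E i) : ovw T E z N y = T y := by
  induction N with
  | zero => rfl
  | succ N ih =>
    rw [ovw, Function.update_of_ne (h N (by omega)), ih (fun i hi => h i (by omega))]

theorem ovw_eq (T : Bits n → Bits n) (E z : ℕ → Bits n) (N : ℕ)
    (hE : ∀ i < N, ∀ j < N, E i = E j → i = j) (i : ℕ) (hi : i < N) :
    ovw T E z N (E i) = z i := by
  induction N with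
  | zero => omega
  | succ N ih =>
    rw [ovw]
    by_cases h : i = N
    · subst h; simp
    · rw [Function.update_of_ne, ih (fun i hi j hj => hE i (by omega) j (by omega)) (by omega)]
      intro h'
      exact h (hE _ hi _ (by omega) h')

theorem ovw_congr (T : Bits n → Bits n) (E z E' z' : ℕ → Bits n) (N : ℕ) (y : Bits n)
    (hz : ∀ i < N, z i = z' i) (hE : ∀ i < N, (y = E i ↔ y = E' i)) :
    ovw T E z N y = ovw T E' z' N y := by
  induction N with
  | zero => rfl
  | succ N ih =>
    have ih := ih (fun i hi => hz i (by omega)) (fun i hi => hE i (by omega))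
    have h := hE N (by omega)
    simp only [ovw, Function.update_apply, ih, hz N (by omega), h]

theorem ovw_trunc (T : Bits n → Bits n) (E z : ℕ → Bits n) (M N : ℕ) (hMN : M ≤ N) (y : Bits n)
    (h : ∀ i, M ≤ i → i < N → y ≠ E i) : ovw T E z N y = ovw T E z M y := by
  induction N, hMN using Nat.le_induction with
  | base => rfl
  | succ N hMN ih =>
    rw [ovw, Function.update_of_ne (h N hMN (by omega)), ih (fun i h1 h2 => h i h1 (by omega))]

theorem advAns_congr (RO RO' : Bits n → Bits n) (f : List (Bits n) → Bits n) (t : ℕ)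
    (h : ∀ t' < t, RO (advQ n RO f t') = RO' (advQ n RO f t')) :
    advAns n RO f t = advAns n RO' f t := by
  induction t with
  | zero => rfl
  | succ t ih =>
    have ih := ih (fun t' ht' => h t' (by omega))
    have h := h t (by omega)
    rw [advQ] at h
    rw [advAns, advAns, h, ih]

theorem mstate_congr {s q m : ℕ} {I : Type} (A : MPC n s q m I) (RO RO' : Bits n → Bits n)
    (X : I) (k : ℕ)
    (h : ∀ k' < k, ∀ i, ∀ t < q, RO (mquery A RO X k' i t) = RO' (mquery A RO X k' i t)) :
    mstate A RO X k = mstate A RO' X k := by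
  induction k with
  | zero => rfl
  | succ k ih =>
    have ih := ih (fun k' hk' => h k' (by omega))
    have h := h k (by omega)
    funext j
    simp only [mstate]
    congr 3
    funext i
    have : advAns n RO (A.qf k i (mstate A RO X k i)) q
        = advAns n RO' (A.qf k i (mstate A RO X k i)) q :=
      advAns_congr _ _ _ _ (fun t ht => h i t ht)
    rw [this, ih]

end basics

section encode

variable {n u v : ℕ}

/-- Node `i` (0-based) of a chain with pointers `P` and random parts `R`. -/
def node (n W : ℕ) (P : ℕ → Fin v) (R : ℕ → Bits u) (X : Fin v → Bits u) (i : ℕ) : Bits n :=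
  lineStr n W u (i + 1) (X (P i)) (R i)

/-- The `t`-th query of the algorithm `f` reveals block `j`. -/
def hit (W w : ℕ) (T : Bits n → Bits n) (z : ℕ → Bits n) (P : ℕ → Fin v) (R : ℕ → Bits u)
    (X : Fin v → Bits u) (f : List (Bits n) → Bits n) (t : ℕ) (j : Fin v) : Prop :=
  ∃ i < w, advQ n (ovw T (node n W P R X) z w) f t = node n W P R X i ∧ P i = j

variable {𝒜 : Type} (W w : ℕ) (T : Bits n → Bits n) (Z : 𝒜 → ℕ → Bits n)
  (P : 𝒜 → ℕ → Fin v) (R : 𝒜 → ℕ → Bits u)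

/-- The code `(fm, g)` is correct for `X`. -/
def valid {q α : ℕ} (f : List (Bits n) → Bits n) (fm : Fin α → Fin v) (g : Fin α → Fin q × 𝒜)
    (X : Fin v → Bits u) : Prop :=
  ∀ c, hit W w T (Z (g c).2) (P (g c).2) (R (g c).2) X f (g c).1 (fm c) ∧
    ∀ a, ∀ t < ((g c).1 : ℕ), ¬ hit W w T (Z a) (P a) (R a) X f t (fm c)

theorem decode (hn : W + 2 * u ≤ n) {q α : ℕ} (f : List (Bits n) → Bits n) (fm : Fin α → Fin v)
    (g : Fin α → Fin q × 𝒜) (X X' : Fin v → Bits u)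
    (hX : valid W w T Z P R f fm g X) (hX' : valid W w T Z P R f fm g X')
    (hag : ∀ j, (∀ c, fm c ≠ j) → X j = X' j) : X = X' := by
  have main : ∀ t : ℕ,
      (∀ a, advAns n (ovw T (node n W (P a) (R a) X) (Z a) w) f t
        = advAns n (ovw T (node n W (P a) (R a) X') (Z a) w) f t) ∧
      (∀ c, ((g c).1 : ℕ) < t → X (fm c) = X' (fm c)) := by
    intro t
    induction t with
    | zero => exact ⟨fun a => rfl, fun c h => by omega⟩
    | succ t ih =>
      obtain ⟨ih1, ih2⟩ := ih
      have hq : ∀ a, advQ n (ovw T (node n W (P a) (R a) X) (Z a) w) f t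
        = advQ n (ovw T (node n W (P a) (R a) X') (Z a) w) f t := by
        intro a; rw [advQ, advQ, ih1 a]
      have h2 : ∀ c, ((g c).1 : ℕ) < t + 1 → X (fm c) = X' (fm c) := by
        intro c hc
        rcases Nat.lt_succ_iff_lt_or_eq.1 hc with h | h
        · exact ih2 c h
        · obtain ⟨i, hi, e1, e2⟩ := (hX c).1
          obtain ⟨i', hi', e1', e2'⟩ := (hX' c).1
          rw [h] at e1 e1'
          rw [hq, e1'] at e1
          have := (lineStr_inj hn e1).1
          rw [e2, e2'] at this
          exact this.symm
      refine ⟨fun a => ?_, h2⟩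
      rw [advAns, advAns, ← ih1 a]
      congr 2
      apply ovw_congr
      · intros; rfl
      · intro i hi
        constructor
        · intro h
          have hh : hit W w T (Z a) (P a) (R a) X f t (P a i) := ⟨i, hi, h, rfl⟩
          rw [h, node, node]
          congr 1
          by_cases hc : ∃ c, fm c = P a i
          · obtain ⟨c, hc⟩ := hc
            rw [← hc]
            apply h2
            by_contra hlt
            exact (hX c).2 a t (by omega) (hc ▸ hh)
          · push Not at hc
            exact hag _ hc
        · intro h
          have hh : hit W w T (Z a) (P a) (R a) X' f t (P a i) := by
            refine ⟨i, hi, ?_, rfl⟩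
            rw [← hq]; exact h
          rw [h, node, node]
          congr 1
          by_cases hc : ∃ c, fm c = P a i
          · obtain ⟨c, hc⟩ := hc
            rw [← hc]
            symm
            apply h2
            by_contra hlt
            exact (hX' c).2 a t (by omega) (hc ▸ hh)
          · push Not at hc
            exact (hag _ hc).symm
  funext j
  by_cases hc : ∃ c, fm c = j
  · obtain ⟨c, rfl⟩ := hc
    exact (main q).2 c (g c).1.2
  · push Not at hc
    exact hag _ hc

theorem valid_prob (hn : W + 2 * u ≤ n) {q α : ℕ} (f : List (Bits n) → Bits n)
    (fm : Fin α → Fin v) (hfm : Function.Injective fm) (g : Fin α → Fin q × 𝒜) :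
    unifProb (valid W w T Z P R f fm g) ≤ ((2 : ℝ) ^ (u * α))⁻¹ := by
  have := lens (valid W w T Z P R f fm g) (fun X r => Function.extend fm r X)
    (fun X => X ∘ fm) ?_ ?_ ?_ 1 zero_le_one ?_
  · rw [← one_div, le_div_iff₀ (by positivity)]
    simpa [pow_mul] using this
  · intro X r r'
    funext j
    by_cases hc : ∃ c, fm c = j
    · obtain ⟨c, rfl⟩ := hc
      simp [hfm.extend_apply]
    · simp [Function.extend_apply' _ _ _ hc]
  · intro X
    funext j
    by_cases hc : ∃ c, fm c = j
    · obtain ⟨c, rfl⟩ := hc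
      simp [hfm.extend_apply]
    · simp [Function.extend_apply' _ _ _ hc]
  · intro X r
    funext c
    simp [hfm.extend_apply]
  · intro X
    have : Set.ncard {r | valid W w T Z P R f fm g (Function.extend fm r X)} ≤ 1 := by
      rw [Set.ncard_le_one_iff]
      intro r r' h h'
      have := decode W w T Z P R hn f fm g _ _ h h' (by
        intro j hj
        have hc : ¬ ∃ c, fm c = j := by push Not; exact hj
        simp [Function.extend_apply' _ _ _ hc])
      funext c
      have := congrFun this (fm c)
      simpa [hfm.extend_apply] using this
    exact_mod_cast this

/-- The set of blocks revealed over all branches. -/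
def revealed (q : ℕ) (f : List (Bits n) → Bits n) (X : Fin v → Bits u) : Set (Fin v) :=
  {j | ∃ a, ∃ t < q, hit W w T (Z a) (P a) (R a) X f t j}

theorem revealed_prob [Fintype 𝒜] (hn : W + 2 * u ≤ n) {s : ℕ} (q α : ℕ)
    (F : Bits s → List (Bits n) → Bits n) (σ : (Fin v → Bits u) → Bits s) :
    unifProb (fun X => α ≤ (revealed W w T Z P R q (F (σ X)) X).ncard) ≤
      (2 : ℝ) ^ s * ((v : ℝ) * (q * Fintype.card 𝒜)) ^ α * ((2 : ℝ) ^ (u * α))⁻¹ := by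
  classical
  have h1 : unifProb (fun X => α ≤ (revealed W w T Z P R q (F (σ X)) X).ncard) ≤
      unifProb (fun X => ∃ x ∈ (Finset.univ :
          Finset (Bits s × (Fin α → Fin v) × (Fin α → Fin q × 𝒜))),
        Function.Injective x.2.1 ∧ valid W w T Z P R (F x.1) x.2.1 x.2.2 X) := by
    apply unifProb_mono
    intro X hX
    obtain ⟨J, hJ, hJc⟩ := Set.exists_subset_card_eq hX
    have hJf : J.Finite := Set.toFinite _
    have hcard : Fintype.card J = α := by
      rw [← hJc, Set.ncard_eq_toFinset_card', Set.toFinset_card]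
    let e : Fin α ≃ J := (Fintype.equivFinOfCardEq hcard).symm
    have hex : ∀ c : Fin α, ∃ t : ℕ, t < q ∧
        ∃ a, hit W w T (Z a) (P a) (R a) X (F (σ X)) t (e c) := by
      intro c
      obtain ⟨a, t, ht, h⟩ := hJ (e c).2
      exact ⟨t, ht, a, h⟩
    have hex2 : ∀ c : Fin α, ∃ ta : Fin q × 𝒜,
        hit W w T (Z ta.2) (P ta.2) (R ta.2) X (F (σ X)) ta.1 (e c) ∧
        ∀ a, ∀ t < (ta.1 : ℕ), ¬ hit W w T (Z a) (P a) (R a) X (F (σ X)) t (e c) := by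
      intro c
      obtain ⟨ht, a, ha⟩ := Nat.find_spec (hex c)
      refine ⟨(⟨Nat.find (hex c), ht⟩, a), ha, ?_⟩
      intro a' t' ht' hh
      exact Nat.find_min (hex c) ht' ⟨lt_trans ht' ht, a', hh⟩
    choose g hg using hex2
    exact ⟨(σ X, fun c => (e c : Fin v), g), Finset.mem_univ _,
      Subtype.val_injective.comp e.injective, hg⟩
  refine h1.trans ((unifProb_exists _ _).trans ?_)
  have h2 : ∀ x ∈ (Finset.univ : Finset (Bits s × (Fin α → Fin v) × (Fin α → Fin q × 𝒜))),
      unifProb (fun X => Function.Injective x.2.1 ∧ valid W w T Z P R (F x.1) x.2.1 x.2.2 X)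
        ≤ ((2 : ℝ) ^ (u * α))⁻¹ := by
    rintro ⟨σ0, fm, g⟩ -
    by_cases hfm : Function.Injective fm
    · exact (unifProb_mono (fun X h => h.2)).trans
        (valid_prob W w T Z P R hn (F σ0) fm hfm g)
    · simp only [hfm, false_and]
      simp only [unifProb]
      simp
  refine (Finset.sum_le_sum h2).trans (le_of_eq ?_)
  simp [mul_pow, mul_assoc]

end encode

section fields

variable {n : ℕ}

/-- Overwrite a block of bits. -/
def setF {len : ℕ} (y : Bits n) (lo : ℕ) (b : Bits len) : Bits n := fun j =>
  if h : lo ≤ (j : ℕ) ∧ (j : ℕ) < lo + len then b ⟨j - lo, by omega⟩ else y j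

/-- Read a block of bits. -/
def getF (y : Bits n) (lo len : ℕ) : Bits len := fun j => bitAt y (lo + j)

theorem setF_setF {len : ℕ} (y : Bits n) (lo : ℕ) (b b' : Bits len) :
    setF (setF y lo b) lo b' = setF y lo b' := by
  funext j
  unfold setF
  split_ifs <;> rfl

theorem setF_getF (y : Bits n) (lo len : ℕ) : setF y lo (getF y lo len) = y := by
  funext j
  unfold setF getF
  split_ifs with h
  · have : lo + ((j : ℕ) - lo) = j := by omega
    simp [this, bitAt_fin]
  · rfl

theorem getF_setF {len : ℕ} (y : Bits n) (lo : ℕ) (b : Bits len) (h : lo + len ≤ n) :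
    getF (setF y lo b) lo len = b := by
  funext j
  have h1 : lo + (j : ℕ) < n := by omega
  simp [getF, setF, bitAt, h1]

theorem natOf_getF (y : Bits n) (κ : ℕ) : natOf (getF y 0 κ) κ = natOf y κ := by
  unfold natOf
  refine Finset.sum_congr rfl fun j hj => ?_
  have hj : j < κ := by simpa using hj
  have : bitAt (getF y 0 κ) j = bitAt y j := by
    conv_lhs => unfold bitAt
    simp [hj, getF]
  rw [this]

end fields

section chain

variable {n u v w : ℕ} [NeZero v]

/-- Pointer encoded by `κ` bits. -/
def toF (v : ℕ) [NeZero v] {κ : ℕ} (b : Bits κ) : Fin v := Fin.ofNat v (natOf b κ)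

theorem toF_inj {κ : ℕ} (hv : v = 2 ^ κ) : Function.Injective (toF v (κ := κ)) := by
  intro b b' h
  have h := congrArg Fin.val h
  simp only [toF, Fin.val_ofNat] at h
  rw [Nat.mod_eq_of_lt (hv ▸ natOf_lt b), Nat.mod_eq_of_lt (hv ▸ natOf_lt b')] at h
  exact natOf_inj _ _ h

/-- Pointers determined by the chain answers. -/
def ptr (v κ : ℕ) [NeZero v] (z : ℕ → Bits n) : ℕ → Fin v
  | 0 => 0
  | i + 1 => toF v (getF (z i) 0 κ)

/-- Random parts determined by the chain answers. -/
def rr (u κ : ℕ) (z : ℕ → Bits n) : ℕ → Bits u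
  | 0 => fun _ => false
  | i + 1 => getF (z i) κ u

/-- The chain nodes determined by the chain answers. -/
def EE (W κ : ℕ) (z : ℕ → Bits n) (X : Fin v → Bits u) : ℕ → Bits n :=
  node n W (ptr v κ z) (rr u κ z) X

/-- The oracle with the first `N` chain answers planted. -/
noncomputable def orc (W κ : ℕ) (T : Bits n → Bits n) (z : ℕ → Bits n) (X : Fin v → Bits u)
    (N : ℕ) : Bits n → Bits n := ovw T (EE W κ z X) z N

/-- Extend a finite list of answers. -/
def ext (z : Fin w → Bits n) (i : ℕ) : Bits n := if h : i < w then z ⟨i, h⟩ else fun _ => false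

theorem EE_congr (W κ : ℕ) (z z' : ℕ → Bits n) (X : Fin v → Bits u) (i : ℕ)
    (h : ∀ i' < i, z i' = z' i') : EE W κ z X i = EE W κ z' X i := by
  cases i with
  | zero => rfl
  | succ i => simp only [EE, node, ptr, rr, h i (by omega)]

theorem orc_congr (W κ : ℕ) (T : Bits n → Bits n) (z z' : ℕ → Bits n) (X : Fin v → Bits u)
    (N : ℕ) (h : ∀ i' < N, z i' = z' i') : orc W κ T z X N = orc W κ T z' X N := by
  funext y
  apply ovw_congr _ _ _ _ _ _ _ h
  intro i hi
  rw [EE_congr W κ z z' X i (fun i' hi' => h i' (by omega))]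

variable {W κ : ℕ}

theorem EE_inj (hn : W + 2 * u ≤ n) (hw : w < 2 ^ W) (z : ℕ → Bits n) (X : Fin v → Bits u) :
    ∀ i < w, ∀ j < w, EE W κ z X i = EE W κ z X j → i = j := by
  intro i hi j hj h
  have := lineStr_idx hn (by omega) (by omega) h
  omega

theorem orc_EE (hn : W + 2 * u ≤ n) (hw : w < 2 ^ W) (T : Bits n → Bits n) (z : ℕ → Bits n)
    (X : Fin v → Bits u) (i : ℕ) (hi : i < w) :
    orc W κ T z X w (EE W κ z X i) = z i :=
  ovw_eq _ _ _ _ (EE_inj hn hw z X) i hi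

theorem lineE_of_chain (RO : Bits n → Bits n) (z : ℕ → Bits n) (X : Fin v → Bits u) (i : ℕ)
    (h : lineChain n u v W κ RO X i = ((ptr v κ z i : ℕ), rr u κ z i)) :
    lineE n u v W κ RO X i = EE W κ z X i := by
  simp only [lineE, h, EE, node, getX, Nat.mod_eq_of_lt (ptr v κ z i).2, Fin.is_lt, dite_true,
    Fin.eta]

theorem lineChain_orc (hn : W + 2 * u ≤ n) (hw : w < 2 ^ W) (T : Bits n → Bits n)
    (z : ℕ → Bits n) (X : Fin v → Bits u) (i : ℕ) (hi : i ≤ w) :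
    lineChain n u v W κ (orc W κ T z X w) X i = ((ptr v κ z i : ℕ), rr u κ z i) := by
  induction i with
  | zero => simp [lineChain, ptr, rr]
  | succ i ih =>
    have h1 := lineE_of_chain _ z X i (ih (by omega))
    have h2 : lineChain n u v W κ (orc W κ T z X w) X (i + 1) =
      (natOf (orc W κ T z X w (lineE n u v W κ (orc W κ T z X w) X i)) κ % v,
        fun j : Fin u => bitAt (orc W κ T z X w (lineE n u v W κ (orc W κ T z X w) X i)) (κ + (j : ℕ))) :=
      rfl
    rw [h2, h1, orc_EE hn hw T z X i (by omega)]
    simp [ptr, rr, toF, natOf_getF]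
    rfl

theorem lineE_orc (hn : W + 2 * u ≤ n) (hw : w < 2 ^ W) (T : Bits n → Bits n)
    (z : ℕ → Bits n) (X : Fin v → Bits u) (i : ℕ) (hi : i ≤ w) :
    lineE n u v W κ (orc W κ T z X w) X i = EE W κ z X i :=
  lineE_of_chain _ z X i (lineChain_orc hn hw T z X i hi)

theorem ext_lt (z : Fin w → Bits n) (i : Fin w) : ext z i = z i := by simp [ext]

/-- Sample space with planted chain answers. -/
abbrev Om (n u v w : ℕ) := (Bits n → Bits n) × (Fin w → Bits n) × (Fin v → Bits u)

theorem transfer (hn : W + 2 * u ≤ n) (hw : w < 2 ^ W)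
    (P : (Bits n → Bits n) × (Fin v → Bits u) → Prop) :
    unifProb P = unifProb (fun ω : Om n u v w =>
      P (orc W κ ω.1 (ext ω.2.1) ω.2.2 w, ω.2.2)) := by
  refine unifProb_transfer (Y := Fin w → Bits n) (fun ω : Om n u v w =>
    ((orc W κ ω.1 (ext ω.2.1) ω.2.2 w, ω.2.2), fun i => ω.1 (EE W κ (ext ω.2.1) ω.2.2 i)))
    ?_ ?_ P
  · rintro ⟨T, z, X⟩ ⟨T', z', X'⟩ h
    simp only [Prod.mk.injEq] at h
    obtain ⟨⟨hRO, rfl⟩, hT⟩ := h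
    have hz : ∀ i ≤ w, ∀ i' < i, ext z i' = ext z' i' := by
      intro i
      induction i with
      | zero => intro _ i' h; omega
      | succ i ih =>
        intro hi i' hi'
        have ih := ih (by omega)
        rcases Nat.lt_succ_iff_lt_or_eq.1 hi' with h | rfl
        · exact ih i' h
        · rw [← orc_EE (κ := κ) hn hw T (ext z) X i' (by omega),
            ← orc_EE (κ := κ) hn hw T' (ext z') X i' (by omega), hRO, EE_congr W κ _ _ X i' ih]
    have hz' : z = z' := by
      funext i
      rw [← ext_lt z, ← ext_lt z', hz w le_rfl i i.2]
    subst hz'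
    have : T = T' := by
      funext y
      by_cases hy : ∃ i < w, y = EE W κ (ext z) X i
      · obtain ⟨i, hi, rfl⟩ := hy
        exact congrFun hT ⟨i, hi⟩
      · push Not at hy
        have := congrFun hRO y
        rw [orc, orc, ovw_ne _ _ _ _ _ hy, ovw_ne _ _ _ _ _ hy] at this
        exact this
    rw [this]
  · simp only [Fintype.card_prod]
    ring

end chain

section round

variable {n u v w s q m : ℕ} [NeZero v] (W κ p : ℕ) (A : MPC n s q m (Fin v → Bits u)) (k : ℕ)
  (i : Fin m)

/-- State of the machine under the oracle with only the first `k*p` answers planted. -/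
noncomputable def st0 (ω : Om n u v w) : Bits s :=
  mstate A (orc W κ ω.1 (ext ω.2.1) ω.2.2 (k * p)) ω.2.2 k i

/-- Replace the pointer parts of the answers `N, …, N+p-1`. -/
def zA {κ p : ℕ} (N : ℕ) (z : Fin w → Bits n) (a : Fin p → Bits κ) : Fin w → Bits n := fun i =>
  if h : N ≤ (i : ℕ) ∧ (i : ℕ) < N + p then setF (z i) 0 (a ⟨i - N, by omega⟩) else z i

/-- Pointer parts of the answers `N, …, N+p-1`. -/
def gA (κ p N : ℕ) (z : Fin w → Bits n) : Fin p → Bits κ := fun c => getF (ext z (N + c)) 0 κ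

theorem zA_zA {κ p : ℕ} (N : ℕ) (z : Fin w → Bits n) (a a' : Fin p → Bits κ) :
    zA N (zA N z a) a' = zA N z a' := by
  funext i
  unfold zA
  split_ifs
  · rw [setF_setF]
  · rfl

theorem zA_gA {κ p : ℕ} (N : ℕ) (z : Fin w → Bits n) : zA N z (gA κ p N z) = z := by
  funext i
  unfold zA gA
  split_ifs with h
  · have : N + ((i : ℕ) - N) = i := by omega
    simp only [this, ext_lt, setF_getF]
  · rfl

theorem gA_zA {κ p : ℕ} (hκ : κ ≤ n) (N : ℕ) (hN : N + p ≤ w) (z : Fin w → Bits n)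
    (a : Fin p → Bits κ) : gA κ p N (zA N z a) = a := by
  funext c
  have h : N + (c : ℕ) < w := by omega
  simp only [gA, ext, h, dite_true, zA]
  rw [dif_pos (by omega), getF_setF _ _ _ (by omega)]
  congr
  omega

theorem ext_zA {κ p : ℕ} (N : ℕ) (z : Fin w → Bits n) (a : Fin p → Bits κ) (i : ℕ) (hi : i < N) :
    ext (zA N z a) i = ext z i := by
  unfold ext
  split_ifs with h
  · unfold zA
    rw [dif_neg (by simp only; omega)]
  · rfl

/-- Blocks revealed to the machine over all possible pointer sequences. -/
def Bset (ω : Om n u v w) : Set (Fin v) :=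
  revealed W w ω.1 (fun a : Fin p → Bits κ => ext (zA (k * p) ω.2.1 a))
    (fun a => ptr v κ (ext (zA (k * p) ω.2.1 a))) (fun a => rr u κ (ext (zA (k * p) ω.2.1 a)))
    q (A.qf k i (st0 W κ p A k i ω)) ω.2.2

theorem Bset_zA (ω : Om n u v w) (a : Fin p → Bits κ) :
    Bset W κ p A k i (ω.1, zA (k * p) ω.2.1 a, ω.2.2) = Bset W κ p A k i ω := by
  have : st0 W κ p A k i (ω.1, zA (k * p) ω.2.1 a, ω.2.2) = st0 W κ p A k i ω := by
    simp only [st0]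
    rw [orc_congr W κ ω.1 _ _ ω.2.2 (k * p) (fun i' hi' => ext_zA (k * p) ω.2.1 a i' hi')]
  simp only [Bset, this, zA_zA]

/-- The machine guesses a node whose predecessor it has not queried. -/
def Jump (x : ℕ × ℕ) (ω : Om n u v w) : Prop :=
  k * p < x.1 ∧ advQ n (orc W κ ω.1 (ext ω.2.1) ω.2.2 (x.1 - 1))
    (A.qf k i (st0 W κ p A k i ω)) x.2 = EE W κ (ext ω.2.1) ω.2.2 x.1

/-- All fresh pointers land in the revealed set, which is small. -/
def Lucky (α : ℕ) (ω : Om n u v w) : Prop :=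
  (Bset W κ p A k i ω).ncard < α ∧
    ∀ c : Fin p, toF v (gA κ p (k * p) ω.2.1 c) ∈ Bset W κ p A k i ω

/-- Round `k` is the first round with too much progress, by machine `i`. -/
def Bad (ω : Om n u v w) : Prop :=
  (∀ k' < k, ∀ i', ∀ t < q, ∀ idx, k * p ≤ idx → idx < w →
    mquery A (orc W κ ω.1 (ext ω.2.1) ω.2.2 w) ω.2.2 k' i' t ≠ EE W κ (ext ω.2.1) ω.2.2 idx) ∧
  ∃ t < q, ∃ idx, (k + 1) * p ≤ idx ∧ idx < w ∧
    mquery A (orc W κ ω.1 (ext ω.2.1) ω.2.2 w) ω.2.2 k i t = EE W κ (ext ω.2.1) ω.2.2 idx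

theorem jump_prob (hn : W + 2 * u ≤ n) (hκu : κ + u ≤ n) (x : ℕ × ℕ) (hx : x.1 < w) :
    unifProb (Jump (w := w) W κ p A k i x) ≤ (2 : ℝ) ^ (-(u : ℝ)) := by
  by_cases hN : k * p < x.1
  swap
  · have : Jump (w := w) W κ p A k i x = fun _ => False := by
      funext ω; simp [Jump, hN]
    rw [this]
    simp [unifProb]
  have hx1 : x.1 - 1 < w := by omega
  let i0 : Fin w := ⟨x.1 - 1, hx1⟩
  have := lens (Jump (w := w) W κ p A k i x)
    (fun ω (r : Bits u) => (ω.1, Function.update ω.2.1 i0 (setF (ω.2.1 i0) κ r), ω.2.2))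
    (fun ω => getF (ω.2.1 i0) κ u) ?_ ?_ ?_ 1 zero_le_one ?_
  · rw [Real.rpow_neg (by norm_num), Real.rpow_natCast, ← one_div, le_div_iff₀ (by positivity)]
    simpa using this
  · intro ω r r'
    simp [setF_setF]
  · intro ω
    simp [setF_getF]
  · intro ω r
    simp [getF_setF _ _ _ hκu]
  · intro ω
    have : Set.ncard {r : Bits u | Jump (w := w) W κ p A k i x
        (ω.1, Function.update ω.2.1 i0 (setF (ω.2.1 i0) κ r), ω.2.2)} ≤ 1 := by
      rw [Set.ncard_le_one_iff]
      intro r r' h h'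
      have hag : ∀ (r : Bits u), ∀ i' < x.1 - 1,
          ext (Function.update ω.2.1 i0 (setF (ω.2.1 i0) κ r)) i' = ext ω.2.1 i' := by
        intro r i' hi'
        unfold ext
        split_ifs with hh
        · rw [Function.update_of_ne]
          intro h3
          have := congrArg Fin.val h3
          simp [i0] at this
          omega
        · rfl
      have hst : ∀ r : Bits u, st0 W κ p A k i
          (ω.1, Function.update ω.2.1 i0 (setF (ω.2.1 i0) κ r), ω.2.2) = st0 W κ p A k i ω := by
        intro r
        simp only [st0]
        rw [orc_congr W κ ω.1 _ _ ω.2.2 (k * p) (fun i' hi' => hag r i' (by omega))]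
      obtain ⟨-, h⟩ := h
      obtain ⟨-, h'⟩ := h'
      rw [hst] at h h'
      simp only at h h'
      rw [orc_congr W κ ω.1 _ _ ω.2.2 (x.1 - 1) (hag r)] at h
      rw [orc_congr W κ ω.1 _ _ ω.2.2 (x.1 - 1) (hag r')] at h'
      have h2 := (lineStr_inj hn (h.symm.trans h')).2
      obtain ⟨y, hy⟩ : ∃ y, x.1 = y + 1 := ⟨x.1 - 1, by omega⟩
      have hr : ∀ r : Bits u,
          rr u κ (ext (Function.update ω.2.1 i0 (setF (ω.2.1 i0) κ r))) x.1 = r := by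
        intro r
        have e : y = (i0 : ℕ) := by simp [i0]; omega
        rw [hy, rr, e, ext_lt, Function.update_self, getF_setF _ _ _ hκu]
      rw [hr, hr] at h2
      exact h2
    exact_mod_cast this

theorem lucky_prob (hv : v = 2 ^ κ) (hκ : κ ≤ n) (hp : k * p + p ≤ w) (α : ℕ) (h : ℝ)
    (h0 : 0 ≤ h) (hα : ∀ b : ℕ, b < α → (b : ℝ) ≤ h) :
    unifProb (Lucky (w := w) W κ p A k i α) ≤ (h / v) ^ p := by
  have := lens (Lucky (w := w) W κ p A k i α)
    (fun ω (a : Fin p → Bits κ) => (ω.1, zA (k * p) ω.2.1 a, ω.2.2))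
    (fun ω => gA κ p (k * p) ω.2.1) ?_ ?_ ?_ (h ^ p) (by positivity) ?_
  · have hvp : 0 < (v : ℝ) := by rw [hv]; positivity
    rw [div_pow, le_div_iff₀ (by positivity)]
    simpa [hv] using this
  · intro ω r r'
    simp [zA_zA]
  · intro ω
    simp [zA_gA]
  · intro ω r
    simp [gA_zA hκ _ hp]
  · intro ω
    simp only [Lucky, Bset_zA, gA_zA hκ _ hp]
    by_cases hB : (Bset W κ p A k i ω).ncard < α
    · classical
      have h1 : Set.ncard {r : Fin p → Bits κ | (Bset W κ p A k i ω).ncard < α ∧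
          ∀ c, toF v (r c) ∈ Bset W κ p A k i ω} ≤ (Bset W κ p A k i ω).ncard ^ p := by
        have : (Bset W κ p A k i ω).ncard ^ p =
            ((Fintype.piFinset (fun _ : Fin p => (Bset W κ p A k i ω).toFinset) :
              Finset (Fin p → Fin v)) : Set (Fin p → Fin v)).ncard := by
          rw [Set.ncard_coe_finset]
          simp [Set.ncard_eq_toFinset_card']
        rw [this]
        refine Set.ncard_le_ncard_of_injOn (fun r c => toF v (r c)) ?_ ?_ (Set.toFinite _)
        · intro r hr
          simpa using hr.2
        · intro r _ r' _ hrr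
          funext c
          exact toF_inj hv (congrFun hrr c)
      calc _ ≤ (((Bset W κ p A k i ω).ncard ^ p : ℕ) : ℝ) := by exact_mod_cast h1
        _ ≤ h ^ p := by
          push_cast
          gcongr
          exact hα _ hB
    · simp only [hB, false_and]
      simp
      positivity

theorem reveal_prob (hv : v = 2 ^ κ) (hn : W + 2 * u ≤ n) (α : ℕ) :
    unifProb (fun ω : Om n u v w => α ≤ (Bset W κ p A k i ω).ncard) ≤
      (2 : ℝ) ^ s * ((v : ℝ) * (q * (v : ℝ) ^ p)) ^ α * ((2 : ℝ) ^ (u * α))⁻¹ := by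
  set C := (2 : ℝ) ^ s * ((v : ℝ) * (q * (v : ℝ) ^ p)) ^ α * ((2 : ℝ) ^ (u * α))⁻¹ with hC
  have hcpos : 0 < (Fintype.card (Fin v → Bits u) : ℝ) := by
    exact_mod_cast Fintype.card_pos
  have := lens (fun ω : Om n u v w => α ≤ (Bset W κ p A k i ω).ncard)
    (fun ω X => (ω.1, ω.2.1, X)) (fun ω => ω.2.2) (fun _ _ _ => rfl) (fun _ => rfl)
    (fun _ _ => rfl) (C * Fintype.card (Fin v → Bits u)) (by positivity) ?_
  · exact le_of_mul_le_mul_right this hcpos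
  · intro ω
    have := revealed_prob W w ω.1 (fun a : Fin p → Bits κ => ext (zA (k * p) ω.2.1 a))
      (fun a => ptr v κ (ext (zA (k * p) ω.2.1 a))) (fun a => rr u κ (ext (zA (k * p) ω.2.1 a)))
      hn q α (A.qf k i) (fun X => st0 W κ p A k i (ω.1, ω.2.1, X))
    have e : (Fintype.card (Fin p → Bits κ) : ℝ) = (v : ℝ) ^ p := by simp [hv]
    rw [e, ← hC, unifProb, div_le_iff₀ hcpos] at this
    exact this

theorem bad_cases (hp : k * p + p < w) (α : ℕ) (ω : Om n u v w)
    (hbad : Bad W κ p A k i ω) :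
    (∃ x ∈ Finset.range w ×ˢ Finset.range q, Jump W κ p A k i x ω) ∨
      (α ≤ (Bset W κ p A k i ω).ncard ∨ Lucky W κ p A k i α ω) := by
  by_cases hJ : ∃ x ∈ Finset.range w ×ˢ Finset.range q, Jump W κ p A k i x ω
  · exact Or.inl hJ
  right
  by_cases hα : α ≤ (Bset W κ p A k i ω).ncard
  · exact Or.inl hα
  right
  refine ⟨by omega, ?_⟩
  obtain ⟨hno, t, ht, idx, hidx, hidxw, hq⟩ := hbad
  obtain ⟨T, z, X⟩ := ω
  simp only at hno hq
  have hst : mstate A (orc W κ T (ext z) X w) X k i = st0 W κ p A k i (T, z, X) := by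
    rw [st0]
    refine congrFun (mstate_congr A _ _ X k ?_) i
    intro k' hk' i' t' ht'
    exact ovw_trunc _ _ _ _ _ (by omega) _ (fun j hj hj' => hno k' hk' i' t' ht' j hj hj')
  set f := A.qf k i (st0 W κ p A k i (T, z, X)) with hf
  rw [mquery, hst, ← hf] at hq
  set RO := orc W κ T (ext z) X w with hRO
  have NJ : ∀ t < q, ∀ idx, k * p < idx → idx < w → advQ n RO f t = EE W κ (ext z) X idx →
      ∃ t' < t, advQ n RO f t' = EE W κ (ext z) X (idx - 1) := by
    intro t
    induction t using Nat.strong_induction_on with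
    | _ t ih =>
      intro ht idx hi hiw hh
      by_contra hcon
      push Not at hcon
      have hdesc : ∀ d, ∀ t' < t, idx - 1 + d < w →
          advQ n RO f t' ≠ EE W κ (ext z) X (idx - 1 + d) := by
        intro d
        induction d with
        | zero => intro t' ht' _; exact hcon t' ht'
        | succ d ihd =>
          intro t' ht' hd hq'
          obtain ⟨t'', ht'', hq''⟩ := ih t' ht' (by omega) _ (by omega) hd hq'
          exact ihd t'' (by omega) (by omega) hq''
      have hans : advAns n RO f t = advAns n (orc W κ T (ext z) X (idx - 1)) f t := by
        apply advAns_congr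
        intro t' ht'
        apply ovw_trunc _ _ _ _ _ (by omega)
        intro j hj hj'
        have := hdesc (j - (idx - 1)) t' ht' (by omega)
        rwa [Nat.add_sub_cancel' hj] at this
      refine hJ ⟨(idx, t), by simp [hiw, ht], hi, ?_⟩
      simp only
      rw [← hf, advQ, ← hans]
      exact hh
  have hall : ∀ d, ∀ t < q, ∀ idx, k * p ≤ idx → idx + d < w →
      advQ n RO f t = EE W κ (ext z) X (idx + d) →
      ∃ t' < q, advQ n RO f t' = EE W κ (ext z) X idx := by
    intro d
    induction d with
    | zero => intro t ht idx _ _ h; exact ⟨t, ht, h⟩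
    | succ d ih =>
      intro t ht idx h1 h2 h3
      obtain ⟨t', ht', h4⟩ := NJ t ht _ (by omega) h2 h3
      exact ih t' (by omega) idx h1 (by omega) h4
  intro c
  have hk1 : (k + 1) * p = k * p + p := by ring
  obtain ⟨t', ht', h'⟩ := hall (idx - (k * p + c + 1)) t ht (k * p + c + 1) (by omega) (by omega)
    (by rw [hq]; congr 1; omega)
  refine ⟨gA κ p (k * p) z, t', ht', k * p + c + 1, by omega, ?_, ?_⟩
  · simp only [zA_gA]
    exact h'
  · simp only [zA_gA]
    rfl

theorem bad_prob (hv : v = 2 ^ κ) (hn : W + 2 * u ≤ n) (hκu : κ + u ≤ n)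
    (hp : k * p + p < w) (α : ℕ) (h : ℝ)
    (h0 : 0 ≤ h) (hα : ∀ b : ℕ, b < α → (b : ℝ) ≤ h) :
    unifProb (Bad (w := w) W κ p A k i) ≤ (w : ℝ) * q * (2 : ℝ) ^ (-(u : ℝ)) +
      ((2 : ℝ) ^ s * ((v : ℝ) * (q * (v : ℝ) ^ p)) ^ α * ((2 : ℝ) ^ (u * α))⁻¹ +
        (h / v) ^ p) := by
  refine (unifProb_mono (bad_cases W κ p A k i hp α)).trans
    ((unifProb_or _ _).trans (add_le_add ?_ ((unifProb_or _ _).trans (add_le_add ?_ ?_))))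
  · refine (unifProb_exists _ _).trans ?_
    refine (Finset.sum_le_sum (g := fun _ => (2 : ℝ) ^ (-(u : ℝ))) ?_).trans (le_of_eq ?_)
    · intro x hx
      simp at hx
      exact jump_prob W κ p A k i hn hκu x hx.1
    · simp
  · exact reveal_prob W κ p A k i hv hn α
  · exact lucky_prob W κ p A k i hv (by omega) (by omega) α h h0 hα

theorem total (hv : v = 2 ^ κ) (hn : W + 2 * u ≤ n) (hκu : κ + u ≤ n) (hw : w < 2 ^ W)
    (hp : k * p + p < w) (α : ℕ) (h : ℝ)
    (h0 : 0 ≤ h) (hα : ∀ b : ℕ, b < α → (b : ℝ) ≤ h) :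
    unifProb (fun ω : (Bits n → Bits n) × (Fin v → Bits u) =>
      ∃ k' ≤ k, ∃ i : Fin m, ∃ t < q, ∃ idx : ℕ, idx ≤ w ∧ (k + 1) * p < idx ∧
        mquery A ω.1 ω.2 k' i t = lineE n u v W κ ω.1 ω.2 (idx - 1)) ≤
    ((k : ℝ) + 1) * m * ((w : ℝ) * q * (2 : ℝ) ^ (-(u : ℝ)) +
      ((2 : ℝ) ^ s * ((v : ℝ) * (q * (v : ℝ) ^ p)) ^ α * ((2 : ℝ) ^ (u * α))⁻¹ +
        (h / v) ^ p)) := by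
  rw [transfer (W := W) (κ := κ) hn hw]
  have h1 : ∀ ω : Om n u v w,
      (∃ k' ≤ k, ∃ i : Fin m, ∃ t < q, ∃ idx : ℕ, idx ≤ w ∧ (k + 1) * p < idx ∧
        mquery A (orc W κ ω.1 (ext ω.2.1) ω.2.2 w) ω.2.2 k' i t =
          lineE n u v W κ (orc W κ ω.1 (ext ω.2.1) ω.2.2 w) ω.2.2 (idx - 1)) →
      ∃ x ∈ Finset.range (k + 1) ×ˢ (Finset.univ : Finset (Fin m)), Bad W κ p A x.1 x.2 ω := by
    rintro ω ⟨k', hk', i, t, ht, idx, hidx, hidx', hq⟩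
    rw [lineE_orc hn hw _ _ _ _ (by omega)] at hq
    classical
    have hex : ∃ k', ∃ i : Fin m, ∃ t < q, ∃ idx, (k' + 1) * p ≤ idx ∧ idx < w ∧
        mquery A (orc W κ ω.1 (ext ω.2.1) ω.2.2 w) ω.2.2 k' i t
          = EE W κ (ext ω.2.1) ω.2.2 idx := by
      refine ⟨k', i, t, ht, idx - 1, ?_, by omega, hq⟩
      have : (k' + 1) * p ≤ (k + 1) * p := Nat.mul_le_mul_right _ (by omega)
      omega
    have hle : Nat.find hex ≤ k' := Nat.find_min' hex (by
      refine ⟨i, t, ht, idx - 1, ?_, by omega, hq⟩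
      have : (k' + 1) * p ≤ (k + 1) * p := Nat.mul_le_mul_right _ (by omega)
      omega)
    obtain ⟨i1, t1, ht1, idx1, h11, h12, h13⟩ := Nat.find_spec hex
    refine ⟨(Nat.find hex, i1), by
      simp only [Finset.mem_product, Finset.mem_range, Finset.mem_univ, and_true]; omega,
      ?_, t1, ht1, idx1, h11, h12, h13⟩
    intro k2 hk2 i2 t2 ht2 idx2 h21 h22 h23
    refine Nat.find_min hex hk2 ⟨i2, t2, ht2, idx2, le_trans ?_ h21, h22, h23⟩
    exact Nat.mul_le_mul_right _ (by simpa using hk2)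
  refine (unifProb_mono h1).trans ((unifProb_exists _ _).trans ?_)
  refine (Finset.sum_le_sum (fun x hx => bad_prob W κ p A x.1 x.2 hv hn hκu ?_ α h h0 hα)).trans
    (le_of_eq ?_)
  · simp at hx
    have : x.1 * p ≤ k * p := Nat.mul_le_mul_right _ (by omega)
    omega
  · rw [Finset.sum_const, nsmul_eq_mul, Finset.card_product]
    simp only [Finset.card_range, Finset.card_univ, Fintype.card_fin]
    push_cast
    ring

end round

theorem mid_bound (u v p s q : ℕ) (hv : 1 ≤ v) (hq : 1 ≤ q) (D : ℝ) (hD : 0 < D)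
    (hDe : D = (u : ℝ) - ((p : ℝ) + 2) * Real.logb 2 v - Real.logb 2 q) (α : ℕ)
    (hα : (s : ℝ) / D + 1 ≤ α) :
    (2 : ℝ) ^ s * ((v : ℝ) * (q * (v : ℝ) ^ p)) ^ α * ((2 : ℝ) ^ (u * α))⁻¹
      ≤ (2 : ℝ) ^ (-D) := by
  have hv0 : (0 : ℝ) < v := by exact_mod_cast hv
  have hq0 : (0 : ℝ) < q := by exact_mod_cast hq
  have hL : 0 ≤ Real.logb 2 v := Real.logb_nonneg (by norm_num) (by exact_mod_cast hv)
  have e1 : (v : ℝ) = (2 : ℝ) ^ (Real.logb 2 v) :=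
    (Real.rpow_logb (by norm_num) (by norm_num) hv0).symm
  have e2 : (q : ℝ) = (2 : ℝ) ^ (Real.logb 2 q) :=
    (Real.rpow_logb (by norm_num) (by norm_num) hq0).symm
  have hb : (v : ℝ) * (q * (v : ℝ) ^ p) * ((2 : ℝ) ^ u)⁻¹ ≤ (2 : ℝ) ^ (-D) := by
    have : (v : ℝ) * (q * (v : ℝ) ^ p) * ((2 : ℝ) ^ u)⁻¹
        = (2 : ℝ) ^ (Real.logb 2 v + (Real.logb 2 q + Real.logb 2 v * p) + -(u : ℝ)) := by
      rw [Real.rpow_add (by norm_num), Real.rpow_add (by norm_num), Real.rpow_add (by norm_num),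
        Real.rpow_mul (by norm_num), ← e1, ← e2, Real.rpow_neg (by norm_num),
        Real.rpow_natCast, Real.rpow_natCast]
    rw [this]
    apply Real.rpow_le_rpow_of_exponent_le (by norm_num)
    rw [hDe]
    linarith
  have hsD : (s : ℝ) + D ≤ D * α := by
    have := mul_le_mul_of_nonneg_left hα hD.le
    have e : D * ((s : ℝ) / D + 1) = s + D := by field_simp
    linarith
  calc (2 : ℝ) ^ s * ((v : ℝ) * (q * (v : ℝ) ^ p)) ^ α * ((2 : ℝ) ^ (u * α))⁻¹
      = (2 : ℝ) ^ s * ((v : ℝ) * (q * (v : ℝ) ^ p) * ((2 : ℝ) ^ u)⁻¹) ^ α := by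
        rw [mul_pow _ (((2 : ℝ) ^ u)⁻¹), inv_pow, ← pow_mul, mul_assoc]
    _ ≤ (2 : ℝ) ^ s * ((2 : ℝ) ^ (-D)) ^ α := by gcongr
    _ = (2 : ℝ) ^ ((s : ℝ) + -D * α) := by
        rw [Real.rpow_add (by norm_num), Real.rpow_mul (by norm_num), Real.rpow_natCast,
          Real.rpow_natCast]
    _ ≤ (2 : ℝ) ^ (-D) := by
        apply Real.rpow_le_rpow_of_exponent_le (by norm_num)
        linarith

end LineMPC

/-- **Inductive claim in the proof of Lemma 3.6 (up to an absolute constant `K`).**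
In the Line setting with `u > (p+2)·log₂ v + log₂ q` and
`h := s/(u − (p+2)·log₂ v − log₂ q) + 1`, for every deterministic MPC algorithm and
every round `k` with `0 ≤ k < w/p − 1`, the probability over uniformly random `(RO, X)`
that some query made through round `k` hits `C^{(k+1)} = {e_i : (k+1)·p < i ≤ w}` is at
most `K·(k+1)·m·((h/v)^p + w·q·v^p·2^(−u) + w·2^(−(u − (p+2)·log₂ v − log₂ q)))`.
(Here `lineE … (idx−1)` is the paper's `e_idx`.) -/
theorem stmt16 : ∃ K : ℝ, 0 < K ∧
    ∀ (n u v w κ p W s q m : ℕ),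
    1 ≤ u → 2 ≤ w → 1 ≤ κ → v = 2 ^ κ →
    p = ⌈(Real.logb 2 w) ^ 2⌉₊ → W = Nat.clog 2 (w + p + 2) →
    W + 2 * u ≤ n → κ + u ≤ n → 1 ≤ q → 1 ≤ m →
    ((p : ℝ) + 2) * Real.logb 2 v + Real.logb 2 q < (u : ℝ) →
    ∀ h : ℝ, h = (s : ℝ) / ((u : ℝ) - ((p : ℝ) + 2) * Real.logb 2 v - Real.logb 2 q) + 1 →
    ∀ (A : MPC n s q m (Fin v → Bits u)) (k : ℕ), (k : ℝ) < (w : ℝ) / (p : ℝ) - 1 →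
    unifProb (fun ω : (Bits n → Bits n) × (Fin v → Bits u) =>
      ∃ k' ≤ k, ∃ i : Fin m, ∃ t < q, ∃ idx : ℕ, idx ≤ w ∧ (k + 1) * p < idx ∧
        mquery A ω.1 ω.2 k' i t = lineE n u v W κ ω.1 ω.2 (idx - 1)) ≤
    K * ((k : ℝ) + 1) * (m : ℝ) *
      ((h / (v : ℝ)) ^ p + (w : ℝ) * q * (v : ℝ) ^ p * (2 : ℝ) ^ (-(u : ℝ)) +
        (w : ℝ) *
          (2 : ℝ) ^ (-((u : ℝ) - ((p : ℝ) + 2) * Real.logb 2 v - Real.logb 2 q))) := by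
  refine ⟨1, one_pos, ?_⟩
  intro n u v w κ p W s q m hu hw hκ hv hp hW hn hκu hq hm hlt h hh A k hk
  have hv1 : 1 ≤ v := by rw [hv]; exact Nat.one_le_two_pow
  have : NeZero v := ⟨by omega⟩
  have hw2 : w < 2 ^ W := by
    have := Nat.le_pow_clog (b := 2) (by norm_num) (w + p + 2)
    rw [← hW] at this
    omega
  have hp0 : p ≠ 0 := by
    rintro rfl
    simp at hk
    have : (0 : ℝ) ≤ k := Nat.cast_nonneg k
    linarith
  have hpw : k * p + p < w := by
    have hp1 : (0 : ℝ) < p := by exact_mod_cast Nat.pos_of_ne_zero hp0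
    have h1 : ((k : ℝ) + 1) < (w : ℝ) / p := by linarith
    rw [lt_div_iff₀ hp1] at h1
    have : ((k * p + p : ℕ) : ℝ) < w := by push_cast; linarith
    exact_mod_cast this
  set D : ℝ := (u : ℝ) - ((p : ℝ) + 2) * Real.logb 2 v - Real.logb 2 q with hD
  have hD0 : 0 < D := by rw [hD]; linarith
  have h0 : 0 ≤ h := by rw [hh]; positivity
  have hα : ∀ b : ℕ, b < ⌊h⌋₊ + 1 → (b : ℝ) ≤ h := by
    intro b hb
    exact (Nat.le_floor_iff h0).1 (by omega)
  refine (LineMPC.total W κ p A k hv hn hκu hw2 hpw (⌊h⌋₊ + 1) h h0 hα).trans ?_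
  have hmid := LineMPC.mid_bound u v p s q hv1 hq D hD0 hD (⌊h⌋₊ + 1) (by
    rw [← hh]; push_cast; exact (Nat.lt_floor_add_one h).le)
  rw [one_mul]
  refine mul_le_mul_of_nonneg_left ?_ (by positivity)
  have hw1 : (1 : ℝ) ≤ w := by exact_mod_cast (by omega : 1 ≤ w)
  have hvp : (1 : ℝ) ≤ (v : ℝ) ^ p := one_le_pow₀ (by exact_mod_cast hv1)
  have a1 : (2 : ℝ) ^ (-D) ≤ (w : ℝ) * (2 : ℝ) ^ (-D) :=
    le_mul_of_one_le_left (by positivity) hw1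
  have a2 : (w : ℝ) * q * (2 : ℝ) ^ (-(u : ℝ))
      ≤ (w : ℝ) * q * (v : ℝ) ^ p * (2 : ℝ) ^ (-(u : ℝ)) := by
    exact mul_le_mul_of_nonneg_right (le_mul_of_one_le_right (by positivity) hvp) (by positivity)
  linarith
end

section
/- There is an absolute constant K such that the following holds in the Line setting. Assume u > (p+2)·log₂ v + log₂ q and let h := s/(u − (p+2)·log₂ v − log₂ q) + 1. For every deterministic MPC algorithm with m machines, local memory s bits, and at most q oracle queries per machine per round, and every integer R with 1 ≤ R ≤ w/p − 1, the probability over uniformly random (RO, X) that some machine queries the final Line string e_w during the first R rounds (i.e., e_w ∈ Q^{(≤R−1)}) is at most K·R·m·((h/v)^p + w·q·v^p·2^(−u) + w·2^(−(u − (p+2)·log₂ v − log₂ q))). This is the quantitative content of Lemma 3.2 of the paper: for the parameter setting w = T, u = n/3, v = S/u, s ≤ S/c (c a sufficiently large universal constant), with n ≤ S ≤ T ≤ 2^(n^{1/4}), m ≤ 2^(n^{1/4}) and q ≤ 2^(n/4), it implies that any deterministic MPC algorithm computing Line^RO_{n,w,u,v} with probability at least 1/3 over uniform (RO, X) must run for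 at least w/(log₂ w)² = Ω̃(T) rounds. -/
section Aux

/-- The `u` bits following the pointer. -/
def rOf (n u κ : ℕ) (y : Bits n) : Bits u := fun j => bitAt y (κ + (j : ℕ))
/-- The `x` part of a query. -/
def xPart (n u W : ℕ) (e : Bits n) : Bits u := fun j => bitAt e (W + (j : ℕ))
/-- The `ρ` part of a query. -/
def rPart (n u W : ℕ) (e : Bits n) : Bits u := fun j => bitAt e (W + u + (j : ℕ))
/-- The pointer part of an answer. -/
def ptr (n κ v : ℕ) [NeZero v] (y : Bits n) : Fin v :=
  ⟨natOf y κ % v, Nat.mod_lt _ (Nat.pos_of_ne_zero (NeZero.ne v))⟩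
/-- Replace the pointer part. -/
def setPtr (n κ v : ℕ) (y : Bits n) (b : Fin v) : Bits n :=
  fun j => if (j : ℕ) < κ then Nat.testBit (b : ℕ) (j : ℕ) else y j
/-- Replace the `r` part. -/
def setR (n u κ : ℕ) (y : Bits n) (ρ : Bits u) : Bits n :=
  fun j => if κ ≤ (j : ℕ) ∧ (j : ℕ) < κ + u then bitAt ρ ((j : ℕ) - κ) else y j

variable {n u v W κ : ℕ}

theorem xPart_lineStr (hn : W + 2 * u ≤ n) (i : ℕ) (x ρ : Bits u) :
    xPart n u W (lineStr n W u i x ρ) = x := by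
  funext j
  have hj := j.2
  have h1 : W + (j : ℕ) < n := by omega
  simp [xPart, bitAt, lineStr, h1]

theorem rPart_lineStr (hn : W + 2 * u ≤ n) (i : ℕ) (x ρ : Bits u) :
    rPart n u W (lineStr n W u i x ρ) = ρ := by
  funext j
  have hj := j.2
  have h1 : W + u + (j : ℕ) < n := by omega
  have h2 : ¬ (W + u + (j : ℕ) < W) := by omega
  have h3 : (W + u + (j : ℕ) < W + 2 * u) := by omega
  have h4 : W + u + (j : ℕ) - W - u = j := by omega
  simp [rPart, bitAt, lineStr, h1, h2, h3, h4]

theorem lineStr_inj (hn : W + 2 * u ≤ n) {i i' : ℕ} (hi : i < 2 ^ W) (hi' : i' < 2 ^ W)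
    {x ρ x' ρ' : Bits u} (h : lineStr n W u i x ρ = lineStr n W u i' x' ρ') : i = i' := by
  apply Nat.eq_of_testBit_eq
  intro j
  by_cases hj : j < W
  · have := congrFun h ⟨j, by omega⟩
    simpa [lineStr, hj] using this
  · have h2 : 2 ^ W ≤ 2 ^ j := Nat.pow_le_pow_right (by norm_num) (by omega)
    rw [Nat.testBit_eq_false_of_lt (by omega), Nat.testBit_eq_false_of_lt (by omega)]

theorem ofBits_eq_sum (k : ℕ) (f : Fin k → Bool) :
    Nat.ofBits f = ∑ i : Fin k, if f i then 2 ^ (i : ℕ) else 0 := by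
  induction k with
  | zero => simp
  | succ k ih =>
    rw [Nat.ofBits_succ, ih, Fin.sum_univ_succ, Finset.mul_sum, add_comm]
    congr 1
    · cases f 0 <;> simp
    · apply Finset.sum_congr rfl
      intro i _
      simp only [Function.comp, Fin.val_succ, pow_succ]
      split_ifs <;> ring

theorem natOf_eq_ofBits (hκ : κ ≤ n) (y : Bits n) :
    natOf y κ = Nat.ofBits (fun j : Fin κ => y ⟨j, by omega⟩) := by
  rw [ofBits_eq_sum, natOf, Finset.sum_range]
  apply Finset.sum_congr rfl
  intro i _
  have : (i : ℕ) < n := by omega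
  simp [bitAt, this]

theorem natOf_lt (hκ : κ ≤ n) (y : Bits n) : natOf y κ < 2 ^ κ := by
  rw [natOf_eq_ofBits hκ]; exact Nat.ofBits_lt_two_pow _

theorem ptr_setPtr [NeZero v] (hv : v = 2 ^ κ) (hκ : κ ≤ n) (y : Bits n) (b : Fin v) :
    ptr n κ v (setPtr n κ v y b) = b := by
  apply Fin.ext
  have h1 := natOf_lt hκ (setPtr n κ v y b)
  simp only [ptr]
  rw [Nat.mod_eq_of_lt (by omega), natOf_eq_ofBits hκ]
  apply Nat.eq_of_testBit_eq
  intro j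
  by_cases hj : j < κ
  · rw [Nat.testBit_ofBits_lt _ _ hj]; simp [setPtr, hj]
  · have hb := b.2
    have h2 : 2 ^ κ ≤ 2 ^ j := Nat.pow_le_pow_right (by norm_num) (by omega)
    rw [Nat.testBit_ofBits_ge _ _ (by omega), Nat.testBit_eq_false_of_lt (by omega)]

theorem setPtr_setPtr [NeZero v] (hv : v = 2 ^ κ) (hκ : κ ≤ n) (y : Bits n) (b : Fin v) :
    setPtr n κ v (setPtr n κ v y b) (ptr n κ v y) = y := by
  funext j
  by_cases hj : (j : ℕ) < κ
  · have h1 := natOf_lt hκ y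
    simp only [setPtr, hj, if_true, ptr]
    rw [Nat.mod_eq_of_lt (by omega), natOf_eq_ofBits hκ, Nat.testBit_ofBits_lt _ _ hj]
  · simp [setPtr, hj]

theorem rOf_setPtr (y : Bits n) (b : Fin v) :
    rOf n u κ (setPtr n κ v y b) = rOf n u κ y := by
  funext j
  simp [rOf, bitAt, setPtr]

theorem rOf_setR (hn : κ + u ≤ n) (y : Bits n) (ρ : Bits u) :
    rOf n u κ (setR n u κ y ρ) = ρ := by
  funext j
  have hj := j.2
  have h1 : κ + (j : ℕ) < n := by omega
  simp [rOf, bitAt, setR, h1]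

theorem setR_setR (y : Bits n) (ρ : Bits u) :
    setR n u κ (setR n u κ y ρ) (rOf n u κ y) = y := by
  funext j
  have hj := j.2
  by_cases h : κ ≤ (j : ℕ) ∧ (j : ℕ) < κ + u
  · have h2 : κ + ((j : ℕ) - κ) = j := by omega
    have h3 : (j : ℕ) - κ < u := by omega
    simp [setR, h, rOf, bitAt, h2, h3]
  · simp [setR, h]

theorem lineE_zero [NeZero v] (RO : Bits n → Bits n) (X : Fin v → Bits u) :
    lineE n u v W κ RO X 0 = lineStr n W u 1 (X 0) (fun _ => false) := by
  have : 0 < v := Nat.pos_of_ne_zero (NeZero.ne v)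
  simp [lineE, lineChain, getX, this]

theorem lineE_succ [NeZero v] (RO : Bits n → Bits n) (X : Fin v → Bits u) (k : ℕ) :
    lineE n u v W κ RO X (k + 1) =
      lineStr n W u (k + 2) (X (ptr n κ v (RO (lineE n u v W κ RO X k))))
        (rOf n u κ (RO (lineE n u v W κ RO X k))) := by
  have : 0 < v := Nat.pos_of_ne_zero (NeZero.ne v)
  simp only [lineE, lineChain, getX, Nat.mod_mod, Nat.mod_lt _ this, dite_true]
  rfl

theorem lineE_form [NeZero v] (RO : Bits n → Bits n) (X : Fin v → Bits u) (k : ℕ) :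
    ∃ l ρ, lineE n u v W κ RO X k = lineStr n W u (k + 1) (X l) ρ := by
  cases k with
  | zero => exact ⟨_, _, lineE_zero RO X⟩
  | succ k => exact ⟨_, _, lineE_succ RO X k⟩

theorem lineE_inj [NeZero v] (hn : W + 2 * u ≤ n) {RO RO' : Bits n → Bits n}
    {X X' : Fin v → Bits u} {j j' : ℕ} (hj : j + 1 < 2 ^ W) (hj' : j' + 1 < 2 ^ W)
    (h : lineE n u v W κ RO X j = lineE n u v W κ RO' X' j') : j = j' := by
  obtain ⟨l, ρ, e⟩ := lineE_form (W := W) (κ := κ) RO X j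
  obtain ⟨l', ρ', e'⟩ := lineE_form (W := W) (κ := κ) RO' X' j'
  rw [e, e'] at h
  have := lineStr_inj hn hj hj' h
  omega

theorem lineE_congr [NeZero v] {RO RO' : Bits n → Bits n} {X : Fin v → Bits u} (j : ℕ)
    (h : ∀ j' < j, RO' (lineE n u v W κ RO X j') = RO (lineE n u v W κ RO X j')) :
    lineE n u v W κ RO' X j = lineE n u v W κ RO X j := by
  induction j with
  | zero => simp [lineE_zero]
  | succ j ih =>
    have := ih (fun j' hj' => h j' (by omega))
    rw [lineE_succ, lineE_succ, this, h j (by omega)]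

theorem advAns_congr {RO RO' : Bits n → Bits n} {f : List (Bits n) → Bits n} (t : ℕ)
    (h : ∀ t' < t, RO' (advQ n RO f t') = RO (advQ n RO f t')) :
    advAns n RO' f t = advAns n RO f t := by
  induction t with
  | zero => rfl
  | succ t ih =>
    have h1 := ih (fun t' ht' => h t' (by omega))
    have h2 := h t (by omega)
    simp only [advQ] at h2
    simp only [advAns, h1, h2]

theorem advQ_congr {RO RO' : Bits n → Bits n} {f : List (Bits n) → Bits n} (t : ℕ)
    (h : ∀ t' < t, RO' (advQ n RO f t') = RO (advQ n RO f t')) :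
    advQ n RO' f t = advQ n RO f t := by
  simp only [advQ, advAns_congr t h]

theorem mstate_congr {s q m : ℕ} {I : Type} (A : MPC n s q m I) {RO RO' : Bits n → Bits n}
    (X : I) (k : ℕ)
    (h : ∀ k' < k, ∀ i, ∀ t < q, RO' (mquery A RO X k' i t) = RO (mquery A RO X k' i t)) :
    mstate A RO' X k = mstate A RO X k := by
  induction k with
  | zero => rfl
  | succ k ih =>
    have h1 := ih (fun k' hk' => h k' (by omega))
    funext j
    simp only [mstate, h1]
    congr 3
    funext i
    rw [advAns_congr q (fun t ht => h k (by omega) i t ht)]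

/-- Bad event 2: a chain string is queried although its predecessor was not seen. -/
def Bad2 {s q m : ℕ} (W κ : ℕ) (A : MPC n s q m (Fin v → Bits u)) (k : ℕ) (i : Fin m) (t j : ℕ)
    (ω : (Bits n → Bits n) × (Fin v → Bits u)) : Prop :=
  mquery A ω.1 ω.2 k i t = lineE n u v W κ ω.1 ω.2 (j + 1) ∧
  (∀ k' < k, ∀ i', ∀ t' < q, mquery A ω.1 ω.2 k' i' t' ≠ lineE n u v W κ ω.1 ω.2 j) ∧
  (∀ t' < t, mquery A ω.1 ω.2 k i t' ≠ lineE n u v W κ ω.1 ω.2 j)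

theorem bad2_count [NeZero v] {s q m : ℕ} (A : MPC n s q m (Fin v → Bits u)) (k : ℕ) (i : Fin m)
    (t j : ℕ) (hn : W + 2 * u ≤ n) (hκu : κ + u ≤ n) (hj : j + 1 < 2 ^ W) :
    Set.ncard {ω | Bad2 W κ A k i t j ω} * 2 ^ u ≤
      Fintype.card ((Bits n → Bits n) × (Fin v → Bits u)) := by
  classical
  let F : ((Bits n → Bits n) × (Fin v → Bits u)) × Bits u →
      (Bits n → Bits n) × (Fin v → Bits u) := fun z =>
    (Function.update z.1.1 (lineE n u v W κ z.1.1 z.1.2 j)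
      (setR n u κ (z.1.1 (lineE n u v W κ z.1.1 z.1.2 j)) z.2), z.1.2)
  let G : (Bits n → Bits n) × (Fin v → Bits u) →
      ((Bits n → Bits n) × (Fin v → Bits u)) × Bits u := fun z =>
    ((Function.update z.1 (lineE n u v W κ z.1 z.2 j)
      (setR n u κ (z.1 (lineE n u v W κ z.1 z.2 j)) (rPart n u W (mquery A z.1 z.2 k i t))), z.2),
      rOf n u κ (z.1 (lineE n u v W κ z.1 z.2 j)))
  have hinj : Set.InjOn F ({ω | Bad2 W κ A k i t j ω} ×ˢ Set.univ) := by
    apply Set.LeftInvOn.injOn (f₁' := G)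
    rintro ⟨⟨RO, X⟩, ρ⟩ ⟨⟨h1, h2, h3⟩, -⟩
    simp only at h1 h2 h3
    set e := lineE n u v W κ RO X j with he
    set RO1 := Function.update RO e (setR n u κ (RO e) ρ) with hRO1
    have hne : ∀ e', e' ≠ e → RO1 e' = RO e' := fun e' h => by simp [hRO1, h]
    have hRe : RO1 e = setR n u κ (RO e) ρ := by simp [hRO1]
    have hchain : lineE n u v W κ RO1 X j = e := by
      apply lineE_congr
      intro j' hj'
      apply hne
      intro h
      have := lineE_inj hn (by omega) hj h
      omega
    have hst : mstate A RO1 X k = mstate A RO X k := by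
      apply mstate_congr
      intro k' hk' i' t' ht'
      exact hne _ (h2 k' hk' i' t' ht')
    have hq : mquery A RO1 X k i t = mquery A RO X k i t := by
      unfold mquery
      rw [hst]
      apply advQ_congr
      intro t' ht'
      exact hne _ (h3 t' ht')
    show G (RO1, X) = _
    simp only [G, hchain, hq, hRe, rOf_setR hκu, h1]
    rw [lineE_succ, rPart_lineStr hn, ← he, setR_setR]
    simp [hRO1]
  have := Set.ncard_le_ncard (Set.subset_univ (F '' ({ω | Bad2 W κ A k i t j ω} ×ˢ Set.univ)))
    (Set.finite_univ)
  rw [hinj.ncard_image, Set.ncard_prod, Set.ncard_univ, Set.ncard_univ,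
    Nat.card_eq_fintype_card, Nat.card_eq_fintype_card] at this
  simpa using this

end Aux

section Codes

/-- Hide the blocks outside the list `S`. -/
def maskX {u v : ℕ} (X : Fin v → Bits u) (S : List (Fin v)) : Fin v → Bits u :=
  fun b => if b ∈ S then X b else fun _ => false

/-- A list of codes (latest first) that successively predicts fresh blocks of `X`. -/
def validL {u v : ℕ} {C : Type} (blk : C → Fin v)
    (g : C → List C → (Fin v → Bits u) → Bits u) (X : Fin v → Bits u) : List C → Prop
  | [] => True
  | c :: L => validL blk g X L ∧ blk c ∉ L.map blk ∧ X (blk c) = g c L (maskX X (L.map blk))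

theorem maskX_congr {u v : ℕ} {X X' : Fin v → Bits u} {S : List (Fin v)}
    (h : ∀ b ∈ S, X b = X' b) : maskX X S = maskX X' S := by
  funext b
  unfold maskX
  split_ifs with hb
  · exact h b hb
  · rfl

theorem validL_congr {u v : ℕ} {C : Type} (blk : C → Fin v)
    (g : C → List C → (Fin v → Bits u) → Bits u) {X X' : Fin v → Bits u} (L : List C)
    (h : ∀ b ∈ L.map blk, X b = X' b) (hX : validL blk g X L) : validL blk g X' L := by
  induction L with
  | nil => trivial
  | cons c L ih =>
    obtain ⟨h1, h2, h3⟩ := hX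
    have h' : ∀ b ∈ L.map blk, X b = X' b := fun b hb => h b (by simp at hb ⊢; tauto)
    refine ⟨ih h' h1, h2, ?_⟩
    rw [← h (blk c) (by simp), ← maskX_congr h', h3]

theorem validL_count {u v : ℕ} {C : Type} (blk : C → Fin v)
    (g : C → List C → (Fin v → Bits u) → Bits u) (L : List C) :
    Set.ncard {X | validL blk g X L} * (2 ^ u) ^ L.length ≤ Fintype.card (Fin v → Bits u) := by
  classical
  induction L with
  | nil => simp [validL, Set.ncard_univ, Nat.card_eq_fintype_card]
  | cons c L ih =>
    refine le_trans ?_ ih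
    rw [List.length_cons, pow_succ', ← mul_assoc]
    apply Nat.mul_le_mul_right
    by_cases hc : blk c ∈ L.map blk
    · have : {X | validL blk g X (c :: L)} = ∅ := by
        ext X; simp only [Set.mem_ofPred_eq, Set.mem_empty_iff_false, iff_false]
        exact fun h => h.2.1 hc
      rw [this]; simp
    let F : (Fin v → Bits u) × Bits u → (Fin v → Bits u) := fun z =>
      Function.update z.1 (blk c) z.2
    let G : (Fin v → Bits u) → (Fin v → Bits u) × Bits u := fun X =>
      (Function.update X (blk c) (g c L (maskX X (L.map blk))), X (blk c))
    have hne : ∀ (X : Fin v → Bits u) z, ∀ b ∈ L.map blk, X b = Function.update X (blk c) z b := by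
      intro X z b hb
      rw [Function.update_of_ne]
      rintro rfl
      exact hc hb
    have hinj : Set.InjOn F ({X | validL blk g X (c :: L)} ×ˢ Set.univ) := by
      apply Set.LeftInvOn.injOn (f₁' := G)
      rintro ⟨X, z⟩ ⟨⟨h1, h2, h3⟩, -⟩
      simp only at h1 h2 h3
      simp only [F, G]
      rw [← maskX_congr (hne X z), ← h3]
      simp
    have hsub : F '' ({X | validL blk g X (c :: L)} ×ˢ Set.univ) ⊆ {X | validL blk g X L} := by
      rintro _ ⟨⟨X, z⟩, ⟨⟨h1, h2, h3⟩, -⟩, rfl⟩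
      exact validL_congr blk g L (hne X z) h1
    have := Set.ncard_le_ncard hsub (Set.toFinite _)
    rw [hinj.ncard_image, Set.ncard_prod, Set.ncard_univ, Nat.card_eq_fintype_card] at this
    simpa using this

theorem validL_count_all {u v : ℕ} {C : Type} [Fintype C] (blk : C → Fin v)
    (g : C → List C → (Fin v → Bits u) → Bits u) (t : ℕ) :
    Set.ncard {X | ∃ L : List C, L.length = t ∧ validL blk g X L} * (2 ^ u) ^ t ≤
      Fintype.card C ^ t * Fintype.card (Fin v → Bits u) := by
  classical
  have h1 : {X | ∃ L : List C, L.length = t ∧ validL blk g X L} ⊆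
      ⋃ L ∈ (Finset.univ : Finset (List.Vector C t)), {X | validL blk g X L.1} := by
    rintro X ⟨L, hL, h⟩
    simp only [Set.mem_iUnion, Finset.mem_univ]
    exact ⟨⟨L, hL⟩, trivial, h⟩
  have h2 := (Set.ncard_le_ncard h1 (Set.toFinite _)).trans
    (Finset.set_ncard_biUnion_le _ _)
  refine (Nat.mul_le_mul_right _ h2).trans ?_
  rw [Finset.sum_mul]
  calc _ ≤ ∑ L : List.Vector C t, Fintype.card (Fin v → Bits u) := by
        apply Finset.sum_le_sum
        rintro ⟨L, hL⟩ -
        have := validL_count blk g L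
        rw [hL] at this
        exact this
    _ = _ := by simp

end Codes

section Sim

/-- Reprogram the pointers at the points `pts 0, …, pts (d-1)`. -/
def multiUpd (n κ : ℕ) {v : ℕ} (RO : Bits n → Bits n) (pts : ℕ → Bits n) (a : ℕ → Fin v) :
    ℕ → Bits n → Bits n
  | 0 => RO
  | d + 1 => Function.update (multiUpd n κ RO pts a d) (pts d) (setPtr n κ v (RO (pts d)) (a d))

/-- The branch from `E0` (with index `j+1`) following pointers `a`. -/
def pathE (n u W κ : ℕ) {v : ℕ} (RO : Bits n → Bits n) (Y : Fin v → Bits u) (j : ℕ) (E0 : Bits n)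
    (a : ℕ → Fin v) : ℕ → Bits n
  | 0 => E0
  | c + 1 => lineStr n W u (j + c + 2) (Y (a c))
      (rOf n u κ (RO (pathE n u W κ RO Y j E0 a c)))

variable {n u v W κ : ℕ}

theorem multiUpd_agree {RO : Bits n → Bits n} {pts : ℕ → Bits n} {a : ℕ → Fin v} {d : ℕ}
    {e : Bits n} (r : ℕ) (h : ∀ c, d ≤ c → c < d + r → e ≠ pts c) :
    multiUpd n κ RO pts a (d + r) e = multiUpd n κ RO pts a d e := by
  induction r with
  | zero => rfl
  | succ r ih =>
    rw [← add_assoc, multiUpd, Function.update_of_ne (h (d + r) (by omega) (by omega))]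
    exact ih (fun c h1 h2 => h c h1 (by omega))

theorem multiUpd_off {RO : Bits n → Bits n} {pts : ℕ → Bits n} {a : ℕ → Fin v} {d : ℕ}
    {e : Bits n} (h : ∀ c < d, e ≠ pts c) :
    multiUpd n κ RO pts a d e = RO e := by
  have := multiUpd_agree (κ := κ) (RO := RO) (pts := pts) (a := a) (d := 0) (e := e) d
    (fun c _ h2 => h c (by omega))
  simpa [multiUpd] using this

theorem multiUpd_on {RO : Bits n → Bits n} {pts : ℕ → Bits n} {a : ℕ → Fin v} {d c : ℕ}
    (hc : c < d) (h : ∀ c', c < c' → c' < d → pts c ≠ pts c') :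
    multiUpd n κ RO pts a d (pts c) = setPtr n κ v (RO (pts c)) (a c) := by
  obtain ⟨r, rfl⟩ := Nat.exists_eq_add_of_lt hc
  rw [show c + r + 1 = (c + 1) + r by omega,
    multiUpd_agree r (fun c' h1 h2 => h c' (by omega) (by omega)), multiUpd,
    Function.update_self]

theorem multiUpd_congr {RO : Bits n → Bits n} {pts pts' : ℕ → Bits n} {a : ℕ → Fin v} {d : ℕ}
    (h : ∀ c < d, pts c = pts' c) : multiUpd n κ RO pts a d = multiUpd n κ RO pts' a d := by
  induction d with
  | zero => rfl
  | succ d ih =>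
    rw [multiUpd, multiUpd, ih (fun c hc => h c (by omega)), h d (by omega)]

theorem multiUpd_rOf {RO : Bits n → Bits n} {pts : ℕ → Bits n} {a : ℕ → Fin v} (d : ℕ)
    (e : Bits n) : rOf n u κ (multiUpd n κ RO pts a d e) = rOf n u κ (RO e) := by
  induction d with
  | zero => rfl
  | succ d ih =>
    rw [multiUpd]
    by_cases h : e = pts d
    · subst h; rw [Function.update_self, rOf_setPtr]
    · rw [Function.update_of_ne h, ih]

theorem pathE_congr {RO : Bits n → Bits n} {Y Y' : Fin v → Bits u} {j : ℕ} {E0 : Bits n}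
    {a : ℕ → Fin v} (c : ℕ) (h : ∀ c' < c, Y (a c') = Y' (a c')) :
    pathE n u W κ RO Y j E0 a c = pathE n u W κ RO Y' j E0 a c := by
  induction c with
  | zero => rfl
  | succ c ih => rw [pathE, pathE, ih (fun c' hc' => h c' (by omega)), h c (by omega)]

/-- Queries visit the points `P 0, …, P p` in order, within the first `q` queries. -/
def InOrder (Q P : ℕ → Bits n) (p q : ℕ) : Prop :=
  (∀ c < p, ∀ t < q, Q t = P (c + 1) → ∃ t' < t, Q t' = P c) ∧ ∃ t < q, Q t = P p

theorem InOrder.descend {Q P : ℕ → Bits n} {p q : ℕ} (h : InOrder Q P p q) (c d t : ℕ)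
    (hd : c + d ≤ p) (ht : t < q) (hQ : Q t = P (c + d)) : ∃ t' ≤ t, Q t' = P c := by
  induction d generalizing t with
  | zero => exact ⟨t, le_rfl, hQ⟩
  | succ d ih =>
    obtain ⟨t', h1, h2⟩ := h.1 (c + d) (by omega) t ht hQ
    obtain ⟨t'', h3, h4⟩ := ih t' (by omega) (by omega) h2
    exact ⟨t'', by omega, h4⟩

theorem InOrder.first {Q P : ℕ → Bits n} {p q : ℕ} (h : InOrder Q P p q) (c : ℕ) (hc : c ≤ p) :
    ∃ t < q, Q t = P c ∧ ∀ t' < t, ∀ c', c ≤ c' → c' ≤ p → Q t' ≠ P c' := by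
  classical
  obtain ⟨t, ht, hQ⟩ := h.2
  obtain ⟨t1, h1, h2⟩ := h.descend c (p - c) t (by omega) ht (by rw [hQ]; congr 1; omega)
  have hex : ∃ t, Q t = P c := ⟨t1, h2⟩
  have hle : Nat.find hex ≤ t1 := Nat.find_min' hex h2
  refine ⟨Nat.find hex, by omega, Nat.find_spec hex, ?_⟩
  intro t' ht' c' h3 h4 h5
  obtain ⟨t2, h6, h7⟩ := h.descend c (c' - c) t' (by omega) (by omega)
    (by rw [h5]; congr 1; omega)
  exact Nat.find_min hex (lt_of_le_of_lt h6 ht') h7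

/-- Extend a finite pointer sequence by `0`. -/
def extA {p v : ℕ} [NeZero v] (a : Fin p → Fin v) : ℕ → Fin v :=
  fun c => if h : c < p then a ⟨c, h⟩ else 0

/-- Codes: a pointer sequence, a query index and a block. -/
abbrev Code (p q v : ℕ) := (Fin p → Fin v) × Fin q × Fin v

/-- The query index in the earliest code. -/
def rootIdx {p q v : ℕ} : List (Code p q v) → ℕ
  | [] => 0
  | [c] => c.2.1
  | _ :: d :: L => rootIdx (d :: L)

/-- Predict a block from a code and the previously predicted blocks. -/
noncomputable def guess (W κ j : ℕ) {p q v : ℕ} [NeZero v] (f : List (Bits n) → Bits n)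
    (RO : Bits n → Bits n) (c : Code p q v) : List (Code p q v) → (Fin v → Bits u) → Bits u
  | [], _ => xPart n u W (advQ n RO f c.2.1)
  | d :: L, Y => xPart n u W (advQ n
      (multiUpd n κ RO (pathE n u W κ RO Y j (advQ n RO f (rootIdx (d :: L))) (extA c.1))
        (extA c.1) (sInf {i | extA c.1 i = c.2.2} + 1)) f c.2.1)

/-- The machine `f` follows the reprogrammed branch `a` in order. -/
def GoodA (W κ j p q : ℕ) [NeZero v] (f : List (Bits n) → Bits n) (RO : Bits n → Bits n)
    (X : Fin v → Bits u) (a : Fin p → Fin v) : Prop :=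
  InOrder (advQ n (multiUpd n κ RO (pathE n u W κ RO X j (lineE n u v W κ RO X j) (extA a))
      (extA a) p) f) (pathE n u W κ RO X j (lineE n u v W κ RO X j) (extA a)) p q

theorem closure_or_list [NeZero v] (hn : W + 2 * u ≤ n) {j p q : ℕ} (f : List (Bits n) → Bits n)
    (RO : Bits n → Bits n) (X : Fin v → Bits u) (t : ℕ) :
    (∃ S : Finset (Fin v), S.card ≤ t ∧ ∀ a : Fin p → Fin v, GoodA W κ j p q f RO X a →
      ∀ c, a c ∈ S) ∨
    ∃ L : List (Code p q v), L.length = t + 1 ∧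
      validL (fun c => c.2.2) (guess W κ j f RO) X L ∧
      advQ n RO f (rootIdx L) = lineE n u v W κ RO X j := by
  classical
  induction t with
  | zero =>
    by_cases hex : ∃ a : Fin p → Fin v, GoodA W κ j p q f RO X a
    · right
      obtain ⟨a, ha⟩ := hex
      obtain ⟨t0, h1, h2, h3⟩ := InOrder.first ha 0 (Nat.zero_le _)
      obtain ⟨l, ρ, hl⟩ := lineE_form (W := W) (κ := κ) RO X j
      have hq : advQ n RO f t0 = lineE n u v W κ RO X j := by
        refine Eq.trans ?_ (h2.trans rfl)
        apply advQ_congr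
        intro t' ht'
        rw [multiUpd_off]
        intro c hc
        exact h3 t' ht' c (Nat.zero_le _) (by omega)
      refine ⟨[(a, ⟨t0, h1⟩, l)], rfl, ⟨trivial, by simp, ?_⟩, hq⟩
      simp only [guess]
      rw [hq, hl, xPart_lineStr hn]
    · left
      push Not at hex
      exact ⟨∅, by simp, fun a ha => absurd ha (hex a)⟩
  | succ t ih =>
    rcases ih with ⟨S, hS, h⟩ | ⟨L, hlen, hval, hroot⟩
    · left; exact ⟨S, by omega, h⟩
    set S : List (Fin v) := L.map (fun c => c.2.2) with hSdef
    by_cases hcl : ∀ a : Fin p → Fin v, GoodA W κ j p q f RO X a → ∀ c, a c ∈ S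
    · left
      refine ⟨S.toFinset, (List.toFinset_card_le _).trans (by simp [hSdef, hlen]), ?_⟩
      intro a ha c
      simpa using hcl a ha c
    · right
      push Not at hcl
      obtain ⟨a, ha, c1, hc1⟩ := hcl
      have hex : ∃ c, c < p ∧ extA a c ∉ S := ⟨c1, c1.2, by simpa [extA] using hc1⟩
      set c := Nat.find hex with hc
      obtain ⟨hcp, hcS⟩ := Nat.find_spec hex
      rw [← hc] at hcp hcS
      have hmin : ∀ c' < c, extA a c' ∈ S := by
        intro c' hc'
        by_contra hcon
        exact Nat.find_min hex hc' ⟨by omega, hcon⟩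
      have hinf : sInf {i | extA a i = extA a c} = c := by
        apply le_antisymm
        · exact Nat.sInf_le (by simp)
        · by_contra hlt
          push Not at hlt
          have h1 : sInf {i | extA a i = extA a c} ∈ {i | extA a i = extA a c} :=
            Nat.sInf_mem ⟨c, rfl⟩
          have h2 := hmin _ hlt
          rw [Set.mem_ofPred_eq] at h1
          rw [h1] at h2
          exact hcS h2
      obtain ⟨t1, h1, h2, h3⟩ := InOrder.first ha (c + 1) (by omega)
      obtain ⟨d, L', rfl⟩ : ∃ d L', L = d :: L' := by
        cases L with
        | nil => simp at hlen
        | cons d L' => exact ⟨d, L', rfl⟩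
      refine ⟨(a, ⟨t1, h1⟩, extA a c) :: d :: L', by simp at hlen ⊢; exact hlen,
        ⟨hval, hcS, ?_⟩, hroot⟩
      simp only [guess]
      rw [hroot, hinf]
      have hpath : ∀ c' < c + 1,
          pathE n u W κ RO (maskX X S) j (lineE n u v W κ RO X j) (extA a) c' =
          pathE n u W κ RO X j (lineE n u v W κ RO X j) (extA a) c' := by
        intro c' hc'
        apply pathE_congr
        intro c'' hc''
        simp [maskX, hmin c'' (by omega)]
      rw [← hSdef, multiUpd_congr hpath]
      have hq : advQ n (multiUpd n κ RO
          (pathE n u W κ RO X j (lineE n u v W κ RO X j) (extA a)) (extA a) (c + 1)) f t1 =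
          pathE n u W κ RO X j (lineE n u v W κ RO X j) (extA a) (c + 1) := by
        rw [← h2]
        apply advQ_congr
        intro t' ht'
        obtain ⟨r, hr⟩ := Nat.exists_eq_add_of_le (show c + 1 ≤ p by omega)
        have := multiUpd_agree (κ := κ) (RO := RO)
          (pts := pathE n u W κ RO X j (lineE n u v W κ RO X j) (extA a)) (a := extA a)
          (d := c + 1) (e := advQ n (multiUpd n κ RO
          (pathE n u W κ RO X j (lineE n u v W κ RO X j) (extA a)) (extA a) p) f t') r
          (fun c' h4 h5 => h3 t' ht' c' h4 (by omega))
        rw [← hr] at this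
        exact this.symm
      rw [hq, pathE, xPart_lineStr hn]

/-- Number of `X` for which some machine state predicts many blocks. -/
def Bad3 (W κ j p q : ℕ) [NeZero v] (f : List (Bits n) → Bits n) (RO : Bits n → Bits n) (t : ℕ)
    (X : Fin v → Bits u) : Prop :=
  ∃ L : List (Code p q v), L.length = t ∧ validL (fun c => c.2.2) (guess W κ j f RO) X L

theorem goodA_count [NeZero v] (hn : W + 2 * u ≤ n) {j p q : ℕ} (f : List (Bits n) → Bits n)
    (RO : Bits n → Bits n) (X : Fin v → Bits u) (t : ℕ)
    (h : ¬ Bad3 W κ j p q f RO (t + 1) X) :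
    Set.ncard {a : Fin p → Fin v | GoodA W κ j p q f RO X a} ≤ t ^ p := by
  classical
  rcases closure_or_list (κ := κ) (j := j) (p := p) (q := q) hn f RO X t with
    ⟨S, hS, hc⟩ | ⟨L, h1, h2, h3⟩
  · have hsub : {a : Fin p → Fin v | GoodA W κ j p q f RO X a} ⊆
        ((Fintype.piFinset fun _ : Fin p => S : Finset (Fin p → Fin v)) : Set _) := by
      intro a ha
      simp only [Finset.mem_coe, Fintype.mem_piFinset]
      exact hc a ha
    refine (Set.ncard_le_ncard hsub (Set.toFinite _)).trans ?_
    rw [Set.ncard_coe_finset, Fintype.card_piFinset]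
    simp only [Finset.prod_const, Finset.card_univ, Fintype.card_fin]
    exact Nat.pow_le_pow_left hS p
  · exact absurd ⟨L, h1, h2⟩ h

theorem bad3_count [NeZero v] {j p q : ℕ} (f : List (Bits n) → Bits n)
    (RO : Bits n → Bits n) (t : ℕ) :
    Set.ncard {X : Fin v → Bits u | Bad3 W κ j p q f RO t X} * (2 ^ u) ^ t ≤
      (v ^ p * (q * v)) ^ t * Fintype.card (Fin v → Bits u) := by
  have := validL_count_all (fun c : Code p q v => c.2.2) (guess (n := n) (u := u) W κ j f RO) t
  simpa [Code, Bad3] using this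

end Sim

section Round

variable {n u v W κ : ℕ}

/-- Machine `i` advances by `p` in round `k` in order, from the fresh frontier `j`. -/
def DEv {s q m : ℕ} (W κ : ℕ) (A : MPC n s q m (Fin v → Bits u)) (j p k : ℕ) (i : Fin m)
    (ω : (Bits n → Bits n) × (Fin v → Bits u)) : Prop :=
  (∀ k' < k, ∀ i', ∀ t < q, ∀ c < p,
    mquery A ω.1 ω.2 k' i' t ≠ lineE n u v W κ ω.1 ω.2 (j + c)) ∧
  InOrder (mquery A ω.1 ω.2 k i) (fun c => lineE n u v W κ ω.1 ω.2 (j + c)) p q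

theorem InOrder.congr {Q P P' : ℕ → Bits n} {p q : ℕ} (h : InOrder Q P p q)
    (hP : ∀ c ≤ p, P' c = P c) : InOrder Q P' p q := by
  refine ⟨?_, ?_⟩
  · intro c hc t ht h1
    rw [hP _ (by omega)] at h1
    rw [hP _ (by omega)]
    exact h.1 c hc t ht h1
  · rw [hP _ le_rfl]; exact h.2

/-- Pointers of the actual chain after position `j`. -/
def ptrsOf [NeZero v] (W κ j p : ℕ) (RO : Bits n → Bits n) (X : Fin v → Bits u) : Fin p → Fin v :=
  fun c => ptr n κ v (RO (lineE n u v W κ RO X (j + c)))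

/-- Replace the pointers along the actual chain. -/
def replRO [NeZero v] (W κ j p : ℕ) (RO : Bits n → Bits n) (X : Fin v → Bits u)
    (a : Fin p → Fin v) : Bits n → Bits n :=
  multiUpd n κ RO (fun c => lineE n u v W κ RO X (j + c)) (extA a) p

section
variable [NeZero v] {j p : ℕ} (RO : Bits n → Bits n) (X : Fin v → Bits u) (a : Fin p → Fin v)

theorem replRO_lineE (hn : W + 2 * u ≤ n) (hj : j + p + 1 < 2 ^ W) :
    lineE n u v W κ (replRO W κ j p RO X a) X j = lineE n u v W κ RO X j := by
  apply lineE_congr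
  intro j' hj'
  apply multiUpd_off
  intro c hc h
  have := lineE_inj hn (by omega) (by omega) h
  omega

theorem replRO_path (hn : W + 2 * u ≤ n) (hj : j + p + 1 < 2 ^ W) (c : ℕ) (hc : c ≤ p) :
    pathE n u W κ (replRO W κ j p RO X a) X j
      (lineE n u v W κ (replRO W κ j p RO X a) X j) (extA (ptrsOf W κ j p RO X)) c =
    lineE n u v W κ RO X (j + c) := by
  induction c with
  | zero => exact replRO_lineE RO X a hn hj
  | succ c ih =>
    rw [pathE, ih (by omega), ← add_assoc, lineE_succ, replRO, multiUpd_rOf]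
    simp [extA, ptrsOf, show c < p by omega]

theorem replRO_on (hn : W + 2 * u ≤ n) (hj : j + p + 1 < 2 ^ W) (c : Fin p) :
    replRO W κ j p RO X a (lineE n u v W κ RO X (j + c)) =
      setPtr n κ v (RO (lineE n u v W κ RO X (j + c))) (a c) := by
  have := multiUpd_on (κ := κ) (RO := RO) (pts := fun c => lineE n u v W κ RO X (j + c))
    (a := extA a) (d := p) (c := c) c.2 (by
      intro c' h1 h2 h
      have := lineE_inj hn (by omega) (by omega) h
      omega)
  simpa [replRO, extA] using this

theorem replRO_inv (hn : W + 2 * u ≤ n) (hj : j + p + 1 < 2 ^ W) (hv : v = 2 ^ κ) (hκ : κ ≤ n) :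
    multiUpd n κ (replRO W κ j p RO X a) (pathE n u W κ (replRO W κ j p RO X a) X j
      (lineE n u v W κ (replRO W κ j p RO X a) X j) (extA (ptrsOf W κ j p RO X)))
      (extA (ptrsOf W κ j p RO X)) p = RO := by
  rw [multiUpd_congr (fun c hc => replRO_path RO X a hn hj c (le_of_lt hc))]
  funext e
  by_cases h : ∃ c < p, e = lineE n u v W κ RO X (j + c)
  · obtain ⟨c, hc, rfl⟩ := h
    have := multiUpd_on (κ := κ) (RO := replRO W κ j p RO X a)
      (pts := fun c => lineE n u v W κ RO X (j + c))
      (a := extA (ptrsOf W κ j p RO X)) (d := p) (c := c) hc (by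
        intro c' h1 h2 h
        have := lineE_inj hn (by omega) (by omega) h
        omega)
    rw [this]
    have h2 := replRO_on (κ := κ) RO X a hn hj ⟨c, hc⟩
    simp only at h2 ⊢
    rw [h2]
    have h3 : extA (ptrsOf W κ j p RO X) c = ptr n κ v (RO (lineE n u v W κ RO X (j + c))) := by
      simp [extA, ptrsOf, hc]
    rw [h3, setPtr_setPtr hv hκ]
  · push Not at h
    rw [multiUpd_off h, replRO, multiUpd_off h]

end

theorem dEv_le_good [NeZero v] {s q m : ℕ} (A : MPC n s q m (Fin v → Bits u)) (j p k : ℕ)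
    (i : Fin m) (hn : W + 2 * u ≤ n) (hj : j + p + 1 < 2 ^ W) (hv : v = 2 ^ κ) (hκ : κ ≤ n) :
    Set.ncard {ω | DEv W κ A j p k i ω} * v ^ p ≤
      Set.ncard {z : ((Bits n → Bits n) × (Fin v → Bits u)) × (Fin p → Fin v) |
        GoodA W κ j p q (A.qf k i (mstate A z.1.1 z.1.2 k i)) z.1.1 z.1.2 z.2} := by
  classical
  let F : ((Bits n → Bits n) × (Fin v → Bits u)) × (Fin p → Fin v) →
      ((Bits n → Bits n) × (Fin v → Bits u)) × (Fin p → Fin v) := fun z =>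
    ((replRO W κ j p z.1.1 z.1.2 z.2, z.1.2), ptrsOf W κ j p z.1.1 z.1.2)
  let H : ((Bits n → Bits n) × (Fin v → Bits u)) × (Fin p → Fin v) → (Bits n → Bits n) := fun z =>
    multiUpd n κ z.1.1 (pathE n u W κ z.1.1 z.1.2 j
      (lineE n u v W κ z.1.1 z.1.2 j) (extA z.2)) (extA z.2) p
  let G : ((Bits n → Bits n) × (Fin v → Bits u)) × (Fin p → Fin v) →
      ((Bits n → Bits n) × (Fin v → Bits u)) × (Fin p → Fin v) := fun z =>
    ((H z, z.1.2), fun c => ptr n κ v (z.1.1 (lineE n u v W κ (H z) z.1.2 (j + c))))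
  have hH : ∀ z, H (F z) = z.1.1 := fun z => replRO_inv z.1.1 z.1.2 z.2 hn hj hv hκ
  have hinj : Set.InjOn F ({ω | DEv W κ A j p k i ω} ×ˢ Set.univ) := by
    apply Set.LeftInvOn.injOn (f₁' := G)
    rintro ⟨⟨RO, X⟩, a⟩ -
    simp only [G, hH]
    simp only [F]
    congr 1
    funext c
    rw [replRO_on RO X a hn hj, ptr_setPtr hv hκ]
  have hsub : F '' ({ω | DEv W κ A j p k i ω} ×ˢ Set.univ) ⊆ {z |
        GoodA W κ j p q (A.qf k i (mstate A z.1.1 z.1.2 k i)) z.1.1 z.1.2 z.2} := by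
    rintro _ ⟨⟨⟨RO, X⟩, a⟩, ⟨⟨h1, h2⟩, -⟩, rfl⟩
    simp only at h1 h2
    simp only [F]
    show GoodA W κ j p q (A.qf k i (mstate A (replRO W κ j p RO X a) X k i))
      (replRO W κ j p RO X a) X (ptrsOf W κ j p RO X)
    have hst : mstate A (replRO W κ j p RO X a) X k = mstate A RO X k := by
      apply mstate_congr
      intro k' hk' i' t' ht'
      exact multiUpd_off (fun c hc => h1 k' hk' i' t' ht' c hc)
    unfold GoodA
    rw [replRO_inv RO X a hn hj hv hκ, hst]
    exact InOrder.congr h2 (fun c hc => replRO_path RO X a hn hj c hc)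
  have := Set.ncard_le_ncard hsub (Set.toFinite _)
  rw [hinj.ncard_image, Set.ncard_prod, Set.ncard_univ, Nat.card_eq_fintype_card] at this
  simpa using this

theorem ncard_prod_le {α β : Type} [Fintype α] [Fintype β] (P : α → β → Prop) :
    Set.ncard {z : α × β | P z.1 z.2} ≤ ∑ x : α, Set.ncard {y | P x y} := by
  classical
  have h1 : {z : α × β | P z.1 z.2} ⊆
      ⋃ x ∈ (Finset.univ : Finset α), (Prod.mk x) '' {y | P x y} := by
    rintro ⟨x, y⟩ h
    simp only [Set.mem_iUnion, Finset.mem_univ]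
    exact ⟨x, trivial, y, h, rfl⟩
  refine ((Set.ncard_le_ncard h1 (Set.toFinite _)).trans
    (Finset.set_ncard_biUnion_le _ _)).trans ?_
  exact Finset.sum_le_sum fun x _ => Set.ncard_image_le (Set.toFinite _)

theorem dEv_count [NeZero v] {s q m : ℕ} (A : MPC n s q m (Fin v → Bits u)) (j p k : ℕ)
    (i : Fin m) (hn : W + 2 * u ≤ n) (hj : j + p + 1 < 2 ^ W) (hv : v = 2 ^ κ) (hκ : κ ≤ n)
    (t : ℕ) :
    Set.ncard {ω | DEv W κ A j p k i ω} * v ^ p * (2 ^ u) ^ (t + 1) ≤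
      Fintype.card ((Bits n → Bits n) × (Fin v → Bits u)) *
        (t ^ p * (2 ^ u) ^ (t + 1) + v ^ p * (2 ^ s * (v ^ p * (q * v)) ^ (t + 1))) := by
  classical
  have h1 := (dEv_le_good (κ := κ) A j p k i hn hj hv hκ).trans (ncard_prod_le
    (fun (ω : (Bits n → Bits n) × (Fin v → Bits u)) (a : Fin p → Fin v) =>
      GoodA W κ j p q (A.qf k i (mstate A ω.1 ω.2 k i)) ω.1 ω.2 a))
  have h2 : ∀ ω : (Bits n → Bits n) × (Fin v → Bits u),
      Set.ncard {a : Fin p → Fin v |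
        GoodA W κ j p q (A.qf k i (mstate A ω.1 ω.2 k i)) ω.1 ω.2 a} ≤
      t ^ p + ∑ M : Bits s,
        if Bad3 W κ j p q (A.qf k i M) ω.1 (t + 1) ω.2 then v ^ p else 0 := by
    intro ω
    by_cases hb : Bad3 W κ j p q (A.qf k i (mstate A ω.1 ω.2 k i)) ω.1 (t + 1) ω.2
    · have h3 : Set.ncard {a : Fin p → Fin v |
        GoodA W κ j p q (A.qf k i (mstate A ω.1 ω.2 k i)) ω.1 ω.2 a} ≤ v ^ p := by
        refine (Set.ncard_le_ncard (Set.subset_univ _) (Set.toFinite _)).trans ?_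
        simp [Set.ncard_univ, Nat.card_eq_fintype_card]
      have h4 := Finset.single_le_sum (f := fun M : Bits s =>
        if Bad3 W κ j p q (A.qf k i M) ω.1 (t + 1) ω.2 then v ^ p else 0)
        (fun _ _ => Nat.zero_le _) (Finset.mem_univ (mstate A ω.1 ω.2 k i))
      simp only [hb, if_true] at h4
      omega
    · exact (goodA_count hn _ _ _ t hb).trans (Nat.le_add_right _ _)
  have h3 : ∀ (M : Bits s) (RO : Bits n → Bits n),
      (∑ X : Fin v → Bits u, if Bad3 W κ j p q (A.qf k i M) RO (t + 1) X then v ^ p else 0)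
        * (2 ^ u) ^ (t + 1) ≤
      v ^ p * ((v ^ p * (q * v)) ^ (t + 1) * Fintype.card (Fin v → Bits u)) := by
    intro M RO
    have h4 := bad3_count (v := v) (u := u) (W := W) (κ := κ) (j := j) (p := p) (q := q)
      (A.qf k i M) RO (t + 1)
    rw [← Finset.sum_filter, Finset.sum_const, smul_eq_mul]
    have h5 : (Finset.univ.filter fun X : Fin v → Bits u =>
        Bad3 W κ j p q (A.qf k i M) RO (t + 1) X).card =
        Set.ncard {X : Fin v → Bits u | Bad3 W κ j p q (A.qf k i M) RO (t + 1) X} := by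
      rw [← Set.ncard_coe_finset]; simp
    rw [h5, mul_comm _ (v ^ p), mul_assoc]
    exact Nat.mul_le_mul_left _ h4
  calc _ ≤ (∑ ω : (Bits n → Bits n) × (Fin v → Bits u), (t ^ p + ∑ M : Bits s,
        if Bad3 W κ j p q (A.qf k i M) ω.1 (t + 1) ω.2 then v ^ p else 0)) * (2 ^ u) ^ (t + 1) :=
        Nat.mul_le_mul_right _ (h1.trans (Finset.sum_le_sum fun ω _ => h2 ω))
    _ = Fintype.card ((Bits n → Bits n) × (Fin v → Bits u)) * (t ^ p * (2 ^ u) ^ (t + 1)) +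
        ∑ M : Bits s, ∑ RO : Bits n → Bits n,
        (∑ X : Fin v → Bits u, if Bad3 W κ j p q (A.qf k i M) RO (t + 1) X then v ^ p else 0)
        * (2 ^ u) ^ (t + 1) := by
        rw [Finset.sum_add_distrib, Finset.sum_const, smul_eq_mul, Finset.card_univ, add_mul,
          mul_assoc, Finset.sum_comm, Finset.sum_mul]
        congr 1
        apply Finset.sum_congr rfl
        intro M _
        rw [Fintype.sum_prod_type, Finset.sum_mul]
    _ ≤ Fintype.card ((Bits n → Bits n) × (Fin v → Bits u)) * (t ^ p * (2 ^ u) ^ (t + 1)) +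
        ∑ M : Bits s, ∑ RO : Bits n → Bits n,
          v ^ p * ((v ^ p * (q * v)) ^ (t + 1) * Fintype.card (Fin v → Bits u)) := by
        apply Nat.add_le_add_left
        exact Finset.sum_le_sum fun M _ => Finset.sum_le_sum fun RO _ => h3 M RO
    _ = _ := by
        rw [Finset.sum_const, Finset.sum_const, Finset.card_univ, Finset.card_univ,
          Fintype.card_prod, show Fintype.card (Bits s) = 2 ^ s by simp]
        simp only [smul_eq_mul]
        ring

end Round

section Final

variable {n u v W κ : ℕ}

theorem cover {s q m : ℕ} (A : MPC n s q m (Fin v → Bits u)) (p w R : ℕ)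
    (hp : 1 ≤ p) (hR : 1 ≤ R) (hw : (R + 1) * p ≤ w) (ω : (Bits n → Bits n) × (Fin v → Bits u))
    (h : ∃ k ≤ R - 1, ∃ i : Fin m, ∃ t < q,
        mquery A ω.1 ω.2 k i t = lineE n u v W κ ω.1 ω.2 (w - 1)) :
    ∃ k < R, ∃ i : Fin m, DEv W κ A (k * p) p k i ω ∨
      ∃ t < q, ∃ j < w - 1, Bad2 W κ A k i t j ω := by
  by_contra hcon
  push Not at hcon
  have key : ∀ k ≤ R, ∀ k' < k, ∀ i : Fin m, ∀ t < q, ∀ j', k * p ≤ j' → j' ≤ w - 1 →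
      mquery A ω.1 ω.2 k' i t ≠ lineE n u v W κ ω.1 ω.2 j' := by
    intro k
    induction k with
    | zero => intro _ k' hk'; omega
    | succ k ih =>
      intro hk k' hk' i t ht j' hj1 hj2 heq
      have ihk := ih (by omega)
      have hkp : (k + 1) * p = k * p + p := by ring
      rcases Nat.lt_succ_iff_lt_or_eq.mp hk' with hlt | rfl
      · exact ihk k' hlt i t ht j' (by omega) hj2 heq
      obtain ⟨hD, hB⟩ := hcon k' (by omega) i
      have hRp : (k' + 1) * p + p ≤ w :=
        le_trans (by nlinarith [Nat.mul_le_mul_right p hk]) hw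
      have hstep : ∀ t < q, ∀ c, k' * p + c + 1 ≤ w - 1 →
          mquery A ω.1 ω.2 k' i t = lineE n u v W κ ω.1 ω.2 (k' * p + c + 1) →
          ∃ t' < t, mquery A ω.1 ω.2 k' i t' = lineE n u v W κ ω.1 ω.2 (k' * p + c) := by
        intro t ht c hc hQ
        by_contra hno
        push Not at hno
        refine hB t ht (k' * p + c) (by omega) ⟨hQ, ?_, hno⟩
        intro k'' hk'' i'' t'' ht''
        exact ihk k'' hk'' i'' t'' ht'' _ (by omega) (by omega)
      have hdesc : ∀ d, ∀ t < q, k' * p + (p + d) ≤ w - 1 →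
          mquery A ω.1 ω.2 k' i t = lineE n u v W κ ω.1 ω.2 (k' * p + (p + d)) →
          ∃ t' < q, mquery A ω.1 ω.2 k' i t' = lineE n u v W κ ω.1 ω.2 (k' * p + p) := by
        intro d
        induction d with
        | zero => intro t ht _ hQ; exact ⟨t, ht, hQ⟩
        | succ d ihd =>
          intro t ht hle hQ
          obtain ⟨t', ht', hQ'⟩ := hstep t ht (p + d) (by omega) hQ
          exact ihd t' (by omega) (by omega) hQ'
      apply hD
      refine ⟨?_, ?_, ?_⟩
      · intro k'' hk'' i'' t'' ht'' c hc
        exact ihk k'' hk'' i'' t'' ht'' _ (by omega) (by omega)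
      · intro c hc t ht hQ
        exact hstep t ht c (by omega) hQ
      · apply hdesc (j' - (k' * p + p)) t ht (by omega)
        rw [heq]; congr 1; omega
  obtain ⟨k, hk, i, t, ht, hQ⟩ := h
  refine key R le_rfl k (by omega) i t ht (w - 1) ?_ le_rfl hQ
  have : (R + 1) * p = R * p + p := by ring
  omega

theorem ncard_exists_le {Ω ι : Type} [Fintype Ω] (T : Finset ι) (P : ι → Ω → Prop) (b : ℝ)
    (h : ∀ i ∈ T, (Set.ncard {ω | P i ω} : ℝ) ≤ b) :
    (Set.ncard {ω | ∃ i ∈ T, P i ω} : ℝ) ≤ T.card * b := by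
  classical
  have h1 : {ω | ∃ i ∈ T, P i ω} ⊆ ⋃ i ∈ T, {ω | P i ω} := by
    rintro ω ⟨i, hi, h⟩
    simp only [Set.mem_iUnion]
    exact ⟨i, hi, h⟩
  have h2 := (Set.ncard_le_ncard h1 (Set.toFinite _)).trans (Finset.set_ncard_biUnion_le _ _)
  calc (Set.ncard {ω | ∃ i ∈ T, P i ω} : ℝ) ≤ ((∑ i ∈ T, Set.ncard {ω | P i ω} : ℕ) : ℝ) := by
        exact_mod_cast h2
    _ = ∑ i ∈ T, (Set.ncard {ω | P i ω} : ℝ) := by push_cast; rfl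
    _ ≤ ∑ i ∈ T, b := Finset.sum_le_sum h
    _ = _ := by simp

theorem ncard_or_le {Ω : Type} [Fintype Ω] (P Q : Ω → Prop) :
    (Set.ncard {ω | P ω ∨ Q ω} : ℝ) ≤ Set.ncard {ω | P ω} + Set.ncard {ω | Q ω} := by
  have : {ω | P ω ∨ Q ω} = {ω | P ω} ∪ {ω | Q ω} := rfl
  rw [this]
  exact_mod_cast Set.ncard_union_le _ _

theorem real_bound (D N V P U S T Q t p : ℕ) (hU : 0 < U) (hV : 0 < V)
    (h : D * V ^ p * U ^ (t + 1) ≤ N * (T ^ p * U ^ (t + 1) + V ^ p * (S * Q ^ (t + 1)))) :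
    (D : ℝ) ≤ N * (((T : ℝ) / V) ^ p + S * ((Q : ℝ) / U) ^ (t + 1)) := by
  have hU' : (0 : ℝ) < U := by exact_mod_cast hU
  have hV' : (0 : ℝ) < V := by exact_mod_cast hV
  have h' : (D : ℝ) * V ^ p * U ^ (t + 1) ≤
      N * (T ^ p * U ^ (t + 1) + V ^ p * (S * Q ^ (t + 1))) := by exact_mod_cast h
  have hpos : (0 : ℝ) < V ^ p * U ^ (t + 1) := by positivity
  rw [← mul_le_mul_iff_left₀ hpos]
  calc (D : ℝ) * (V ^ p * U ^ (t + 1)) = D * V ^ p * U ^ (t + 1) := by ring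
    _ ≤ _ := h'
    _ = _ := by
      rw [div_pow, div_pow]
      field_simp

theorem pow_bound (s t : ℕ) (Δ h β : ℝ) (hΔ : 0 < Δ) (hh : h = (s : ℝ) / Δ + 1)
    (ht : h ≤ (t : ℝ) + 1) (hβ0 : 0 ≤ β) (hβ : β ≤ (2 : ℝ) ^ (-Δ)) :
    (2 : ℝ) ^ s * β ^ (t + 1) ≤ (2 : ℝ) ^ (-Δ) := by
  have h1 : Δ * h = s + Δ := by rw [hh]; field_simp
  calc (2 : ℝ) ^ s * β ^ (t + 1) ≤ (2 : ℝ) ^ s * ((2 : ℝ) ^ (-Δ)) ^ (t + 1) := by gcongr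
    _ = (2 : ℝ) ^ ((s : ℝ) + (-Δ) * ((t + 1 : ℕ) : ℝ)) := by
        rw [Real.rpow_add (by norm_num), Real.rpow_natCast, Real.rpow_mul (by norm_num),
          Real.rpow_natCast]
    _ ≤ _ := by
        apply Real.rpow_le_rpow_of_exponent_le (by norm_num)
        push_cast
        nlinarith [mul_le_mul_of_nonneg_left ht hΔ.le]

theorem delta_eq (hv : v = 2 ^ κ) (p q : ℕ) (hq : 1 ≤ q) :
    (2 : ℝ) ^ (-((u : ℝ) - ((p : ℝ) + 2) * Real.logb 2 v - Real.logb 2 q)) =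
      (v : ℝ) ^ (p + 2) * q / 2 ^ u := by
  have hv0 : (0 : ℝ) < v := by rw [hv]; positivity
  have hq0 : (0 : ℝ) < q := by exact_mod_cast hq
  rw [show -((u : ℝ) - ((p : ℝ) + 2) * Real.logb 2 v - Real.logb 2 q) =
    Real.logb 2 v * ((p + 2 : ℕ) : ℝ) + Real.logb 2 q - u by push_cast; ring]
  rw [Real.rpow_sub (by norm_num), Real.rpow_add (by norm_num), Real.rpow_mul (by norm_num),
    Real.rpow_logb (by norm_num) (by norm_num) hv0, Real.rpow_logb (by norm_num) (by norm_num) hq0,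
    Real.rpow_natCast, Real.rpow_natCast]

end Final

/-- **Lemma 3.2 (quantitative form, up to an absolute constant `K`).**
In the Line setting with `u > (p+2)·log₂ v + log₂ q` and
`h := s/(u − (p+2)·log₂ v − log₂ q) + 1`, for every deterministic MPC algorithm and
every number of rounds `R` with `1 ≤ R ≤ w/p − 1`, the probability over uniformly random
`(RO, X)` that some machine queries the final Line string `e_w` during the first `R`
rounds (rounds `0, …, R−1`) is at most
`K·R·m·((h/v)^p + w·q·v^p·2^(−u) + w·2^(−(u − (p+2)·log₂ v − log₂ q)))`.
(Here `lineE … (w−1)` is the paper's `e_w`.) -/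
theorem stmt17 : ∃ K : ℝ, 0 < K ∧
    ∀ (n u v w κ p W s q m : ℕ),
    1 ≤ u → 2 ≤ w → 1 ≤ κ → v = 2 ^ κ →
    p = ⌈(Real.logb 2 w) ^ 2⌉₊ → W = Nat.clog 2 (w + p + 2) →
    W + 2 * u ≤ n → κ + u ≤ n → 1 ≤ q → 1 ≤ m →
    ((p : ℝ) + 2) * Real.logb 2 v + Real.logb 2 q < (u : ℝ) →
    ∀ h : ℝ, h = (s : ℝ) / ((u : ℝ) - ((p : ℝ) + 2) * Real.logb 2 v - Real.logb 2 q) + 1 →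
    ∀ (A : MPC n s q m (Fin v → Bits u)) (R : ℕ), 1 ≤ R → (R : ℝ) ≤ (w : ℝ) / (p : ℝ) - 1 →
    unifProb (fun ω : (Bits n → Bits n) × (Fin v → Bits u) =>
      ∃ k ≤ R - 1, ∃ i : Fin m, ∃ t < q,
        mquery A ω.1 ω.2 k i t = lineE n u v W κ ω.1 ω.2 (w - 1)) ≤
    K * (R : ℝ) * (m : ℝ) *
      ((h / (v : ℝ)) ^ p + (w : ℝ) * q * (v : ℝ) ^ p * (2 : ℝ) ^ (-(u : ℝ)) +
        (w : ℝ) *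
          (2 : ℝ) ^ (-((u : ℝ) - ((p : ℝ) + 2) * Real.logb 2 v - Real.logb 2 q))) := by

  refine ⟨1, one_pos, ?_⟩
  intro n u v w κ p W s q m hu hw hκ hv hp hW hn hκu hq hm hlt h hh A R hR hRw
  haveI : NeZero v := ⟨by rw [hv]; positivity⟩
  have hv0 : 0 < v := Nat.pos_of_ne_zero (NeZero.ne v)
  have hp1 : 1 ≤ p := by
    rw [hp]
    apply Nat.one_le_iff_ne_zero.mpr
    apply (Nat.ceil_pos.mpr _).ne'
    have : 0 < Real.logb 2 (w : ℝ) :=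
      Real.logb_pos (by norm_num) (by exact_mod_cast (show 1 < w by omega))
    positivity
  have hp0 : (0 : ℝ) < p := by exact_mod_cast hp1
  have hRp : (R + 1) * p ≤ w := by
    have h1 : (R : ℝ) + 1 ≤ (w : ℝ) / p := by linarith
    rw [le_div_iff₀ hp0] at h1
    exact_mod_cast h1
  have hWlt : w + p + 2 ≤ 2 ^ W := by rw [hW]; exact Nat.le_pow_clog (by norm_num) _
  set Δ : ℝ := (u : ℝ) - ((p : ℝ) + 2) * Real.logb 2 v - Real.logb 2 q with hΔ
  have hΔ0 : 0 < Δ := by rw [hΔ]; linarith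
  set N := Fintype.card ((Bits n → Bits n) × (Fin v → Bits u)) with hN
  have hN0 : (0 : ℝ) < N := by
    have : 0 < N := Fintype.card_pos
    exact_mod_cast this
  have hh1 : 1 ≤ h := by
    rw [hh]
    have : 0 ≤ (s : ℝ) / Δ := by positivity
    linarith
  have hδ := delta_eq (u := u) hv p q hq
  rw [← hΔ] at hδ
  have hvr : (1 : ℝ) ≤ v := by exact_mod_cast hv0
  have hq0 : (0 : ℝ) < q := by exact_mod_cast hq
  have hw1 : (1 : ℝ) ≤ w := by exact_mod_cast (show 1 ≤ w by omega)
  -- the bound on one round and one machine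
  have hD : ∀ k < R, ∀ i : Fin m, (Set.ncard {ω | DEv W κ A (k * p) p k i ω} : ℝ) ≤
      N * ((h / v) ^ p + w * (2 : ℝ) ^ (-Δ)) := by
    intro k hk i
    have hkp : k * p + p + 1 < 2 ^ W := by
      have : (k + 1) * p ≤ R * p := Nat.mul_le_mul_right p hk
      have h2 : (k + 1) * p = k * p + p := by ring
      have h3 : (R + 1) * p = R * p + p := by ring
      omega
    have h1 := dEv_count (κ := κ) A (k * p) p k i hn hkp hv (by omega) ⌊h⌋₊
    have h2 := real_bound _ _ v 0 (2 ^ u) (2 ^ s) ⌊h⌋₊ (v ^ p * (q * v)) ⌊h⌋₊ p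
      (by positivity) hv0 h1
    refine h2.trans ?_
    rw [← hN]
    have h3 : ((⌊h⌋₊ : ℕ) : ℝ) ≤ h := Nat.floor_le (by linarith)
    have h4 : (((v ^ p * (q * v) : ℕ) : ℝ) / ((2 ^ u : ℕ) : ℝ)) ≤ (2 : ℝ) ^ (-Δ) := by
      rw [hδ]
      push_cast
      apply div_le_div_of_nonneg_right _ (by positivity)
      calc (v : ℝ) ^ p * (q * v) = (v : ℝ) ^ (p + 1) * q := by ring
        _ ≤ (v : ℝ) ^ (p + 2) * q := by gcongr <;> first | exact hvr | omega
    have h5 := pow_bound s ⌊h⌋₊ Δ h _ hΔ0 hh (Nat.lt_floor_add_one h).le (by positivity) h4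
    have h6 : (2 : ℝ) ^ (-Δ) ≤ w * (2 : ℝ) ^ (-Δ) :=
      le_mul_of_one_le_left (by positivity) hw1
    have h7 : (((⌊h⌋₊ : ℕ) : ℝ) / v) ^ p ≤ (h / v) ^ p := by gcongr
    apply mul_le_mul_of_nonneg_left _ hN0.le
    push_cast at h5 ⊢
    linarith
  have hB : ∀ k, ∀ i : Fin m, ∀ t, ∀ j < w - 1, (Set.ncard {ω | Bad2 W κ A k i t j ω} : ℝ) ≤
      N * (2 : ℝ) ^ (-(u : ℝ)) := by
    intro k i t j hj
    have h1 := bad2_count (κ := κ) A k i t j hn hκu (by omega)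
    have h2 : (Set.ncard {ω | Bad2 W κ A k i t j ω} : ℝ) * 2 ^ u ≤ N := by exact_mod_cast h1
    rw [Real.rpow_neg (by norm_num), Real.rpow_natCast, ← div_eq_mul_inv,
      le_div_iff₀ (by positivity)]
    exact h2
  have hB1 : ∀ k, ∀ i : Fin m,
      (Set.ncard {ω | ∃ t ∈ Finset.range q, ∃ j ∈ Finset.range (w - 1), Bad2 W κ A k i t j ω} : ℝ)
      ≤ N * (w * q * (v : ℝ) ^ p * (2 : ℝ) ^ (-(u : ℝ))) := by
    intro k i
    have h1 := ncard_exists_le (Finset.range q)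
      (fun t ω => ∃ j ∈ Finset.range (w - 1), Bad2 W κ A k i t j ω)
      ((Finset.range (w - 1)).card * (N * (2 : ℝ) ^ (-(u : ℝ)))) (fun t _ =>
        ncard_exists_le (Finset.range (w - 1)) (fun j ω => Bad2 W κ A k i t j ω) _
          (fun j hj => hB k i t j (Finset.mem_range.mp hj)))
    refine h1.trans ?_
    rw [Finset.card_range, Finset.card_range]
    have h2 : ((w - 1 : ℕ) : ℝ) ≤ w := by exact_mod_cast Nat.sub_le w 1
    have h3 : (1 : ℝ) ≤ (v : ℝ) ^ p := one_le_pow₀ hvr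
    calc (q : ℝ) * (((w - 1 : ℕ) : ℝ) * (N * (2 : ℝ) ^ (-(u : ℝ))))
        ≤ (q : ℝ) * ((w : ℝ) * (N * (2 : ℝ) ^ (-(u : ℝ)))) := by gcongr
      _ = N * (w * q * 1 * (2 : ℝ) ^ (-(u : ℝ))) := by ring
      _ ≤ _ := by gcongr
  have hmain := ncard_exists_le (Finset.range R)
    (fun k ω => ∃ i ∈ (Finset.univ : Finset (Fin m)), DEv W κ A (k * p) p k i ω ∨
      ∃ t ∈ Finset.range q, ∃ j ∈ Finset.range (w - 1), Bad2 W κ A k i t j ω) _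
    (fun k hk => ncard_exists_le Finset.univ (fun i ω => DEv W κ A (k * p) p k i ω ∨
      ∃ t ∈ Finset.range q, ∃ j ∈ Finset.range (w - 1), Bad2 W κ A k i t j ω) _
      (fun i _ => (ncard_or_le _ _).trans
        (add_le_add (hD k (Finset.mem_range.mp hk) i) (hB1 k i))))
  rw [unifProb, ← hN, div_le_iff₀ hN0]
  have hsub : {ω : (Bits n → Bits n) × (Fin v → Bits u) | ∃ k ≤ R - 1, ∃ i : Fin m, ∃ t < q,
        mquery A ω.1 ω.2 k i t = lineE n u v W κ ω.1 ω.2 (w - 1)} ⊆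
      {ω | ∃ k ∈ Finset.range R, ∃ i ∈ (Finset.univ : Finset (Fin m)),
        DEv W κ A (k * p) p k i ω ∨
        ∃ t ∈ Finset.range q, ∃ j ∈ Finset.range (w - 1), Bad2 W κ A k i t j ω} := by
    intro ω hω
    obtain ⟨k, hk, i, h1⟩ := cover A p w R hp1 hR hRp ω hω
    refine ⟨k, Finset.mem_range.mpr hk, i, Finset.mem_univ _, ?_⟩
    rcases h1 with h1 | ⟨t, ht, j, hj, h1⟩
    · exact Or.inl h1
    · exact Or.inr ⟨t, Finset.mem_range.mpr ht, j, Finset.mem_range.mpr hj, h1⟩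
  have h9 : (Set.ncard {ω : (Bits n → Bits n) × (Fin v → Bits u) |
      ∃ k ≤ R - 1, ∃ i : Fin m, ∃ t < q,
        mquery A ω.1 ω.2 k i t = lineE n u v W κ ω.1 ω.2 (w - 1)} : ℝ) ≤ _ :=
    (Nat.cast_le.mpr (Set.ncard_le_ncard hsub (Set.toFinite _))).trans hmain
  refine h9.trans (le_of_eq ?_)
  rw [Finset.card_range, Finset.card_univ, Fintype.card_fin]
  ring
end
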